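/- arXiv:0906.0655 — 6 statements merged into one kernel-verified Lean document; each statement's English description precedes it below -/
import Mathlib

section
/- Let D be a finite-dimensional central graded division algebra over F, and let τ and τ' be two graded involutions of D. Then there exists a nonzero homogeneous element d ∈ D such that τ'(x) = d·τ(x)·d^{−1} for all x ∈ D. -/
/-!
Since `F` is algebraically closed, the identity component of `D` is `F · 1`: an element `c` of
degree `0` has an eigenvalue `μ`, and `c - μ` is homogeneous and not invertible, hence zero.
Finiteness of the support makes every degree in it torsion, so each nonzero homogeneous element has
a power that is a nonzero scalar; therefore every homogeneous component is at most one-dimensional.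

Let `T` be the support, a finite additive monoid. A degree-preserving algebra endomorphism of `D`
acts on each component by a scalar, and these scalars form a character `T → F`
(`exists_character`). Conjugation by a nonzero element `X s` of degree `s` preserves degrees, so it
gives a character `β s`. If `β s = β t` then `(X t)⁻¹ * X s` is central, hence a scalar, and
`s = t`. By linear independence of characters there are at most `|T|` of them, so the injective
family `β` exhausts them all (`exists_eq_of_injective`). In particular the character of the
automorphism `τ' ∘ τ` is some `β s`, so `τ' ∘ τ` is conjugation by `X s`; substituting `τ x` for `x`
gives the claim.
-/

section GradedDivision

variable {F : Type} [Field F] {D : Type} [Ring D] [Algebra F D] {G : Type} [AddCommGroup G]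
  {gr : G → Submodule F D}

theorem pow_mem_gr_nsmul (hmul : ∀ g h : G, ∀ a ∈ gr g, ∀ b ∈ gr h, a * b ∈ gr (g + h))
    {g : G} {a : D} (ha : a ∈ gr g) (n : ℕ) : a ^ (n + 1) ∈ gr ((n + 1) • g) := by
  induction n with
  | zero => simpa using ha
  | succ n ih =>
    rw [pow_succ, succ_nsmul]
    exact hmul _ _ _ ih _ ha

theorem finite_support {ι : Type} {gr : ι → Submodule F D} [FiniteDimensional F D]
    (hind : iSupIndep gr) : {g : ι | gr g ≠ ⊥}.Finite :=
  WellFoundedGT.finite_ne_bot_of_iSupIndep hind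

/-- Every degree in the support is torsion, because the powers of a homogeneous unit have degrees in
the finite support. -/
theorem exists_nsmul_eq_zero [Nontrivial D] [FiniteDimensional F D] (hind : iSupIndep gr)
    (hmul : ∀ g h : G, ∀ a ∈ gr g, ∀ b ∈ gr h, a * b ∈ gr (g + h))
    {g : G} {a : D} (ha : a ∈ gr g) (hu : IsUnit a) : ∃ n : ℕ, (n + 1) • g = 0 := by
  have hmem : ∀ n : ℕ, (n + 1) • g ∈ {g : G | gr g ≠ ⊥} := fun n hn => by
    have h := pow_mem_gr_nsmul hmul ha n
    rw [hn, Submodule.mem_bot] at h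
    exact (hu.pow (n + 1)).ne_zero h
  obtain ⟨m, n, hmn, he⟩ := Set.Finite.exists_lt_map_eq_of_forall_mem hmem (finite_support hind)
  refine ⟨n - m - 1, ?_⟩
  have h1 : n + 1 = (n - m - 1 + 1) + (m + 1) := by omega
  rw [h1, add_nsmul g (n - m - 1 + 1)] at he
  exact add_eq_right.1 he.symm

theorem one_mem_gr_zero [Nontrivial D] [FiniteDimensional F D] (hind : iSupIndep gr)
    (hmul : ∀ g h : G, ∀ a ∈ gr g, ∀ b ∈ gr h, a * b ∈ gr (g + h))
    {g : G} {a : D} (ha : a ∈ gr g) (hu : IsUnit a) : (1 : D) ∈ gr 0 := by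
  obtain ⟨n, hn⟩ := exists_nsmul_eq_zero hind hmul ha hu
  have hc := pow_mem_gr_nsmul hmul ha n
  rw [hn] at hc
  have hcu : IsUnit (a ^ (n + 1)) := hu.pow _
  -- Left multiplication by a unit of degree `0` is injective, hence surjective, on `gr 0`;
  -- a preimage of the unit itself must be `1`.
  let L : gr 0 →ₗ[F] gr 0 := (LinearMap.mulLeft F (a ^ (n + 1))).restrict
    (fun x hx => by simpa using hmul 0 0 _ hc x hx)
  have hL : Function.Injective L := fun x y hxy =>
    Subtype.ext (hcu.mul_left_cancel (congrArg Subtype.val hxy))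
  obtain ⟨e, he⟩ := (LinearMap.injective_iff_surjective.1 hL) ⟨a ^ (n + 1), hc⟩
  have he' : a ^ (n + 1) * (e : D) = a ^ (n + 1) * 1 := by
    rw [mul_one]
    exact congrArg Subtype.val he
  rw [← hcu.mul_left_cancel he']
  exact e.2

theorem gr_zero_scalar [IsAlgClosed F] [Nontrivial D] [FiniteDimensional F D]
    (hdiv : ∀ g : G, ∀ a ∈ gr g, a ≠ 0 → IsUnit a) (h1 : (1 : D) ∈ gr 0)
    {c : D} (hc : c ∈ gr 0) : ∃ μ : F, c = algebraMap F D μ := by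
  obtain ⟨μ, hμ⟩ := spectrum.nonempty_of_isAlgClosed_of_finiteDimensional F c
  refine ⟨μ, ?_⟩
  by_contra hne
  refine hμ (hdiv 0 _ ?_ (sub_ne_zero.2 (Ne.symm hne)))
  rw [Algebra.algebraMap_eq_smul_one]
  exact (gr 0).sub_mem ((gr 0).smul_mem _ h1) hc

/-- Each homogeneous component is at most one-dimensional. -/
theorem exists_smul_of_mem [IsAlgClosed F] [Nontrivial D] [FiniteDimensional F D]
    (hind : iSupIndep gr)
    (hmul : ∀ g h : G, ∀ a ∈ gr g, ∀ b ∈ gr h, a * b ∈ gr (g + h))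
    (hdiv : ∀ g : G, ∀ a ∈ gr g, a ≠ 0 → IsUnit a)
    {g : G} {a b : D} (ha : a ∈ gr g) (ha0 : a ≠ 0) (hb : b ∈ gr g) : ∃ μ : F, b = μ • a := by
  have hu := hdiv g a ha ha0
  have h1 := one_mem_gr_zero hind hmul ha hu
  obtain ⟨n, hn⟩ := exists_nsmul_eq_zero hind hmul ha hu
  -- `a ^ n * x` has degree `0` for every `x` of degree `g`.
  have key : ∀ x ∈ gr g, a ^ n * x ∈ gr 0 := by
    intro x hx
    cases n with
    | zero =>
      have hg : g = 0 := by simpa using hn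
      simpa [hg] using hx
    | succ m =>
      have h := hmul _ _ _ (pow_mem_gr_nsmul hmul ha m) x hx
      rwa [← succ_nsmul, hn] at h
  obtain ⟨μ, hμ⟩ := gr_zero_scalar hdiv h1 (key b hb)
  obtain ⟨l, hl⟩ := gr_zero_scalar hdiv h1 (key a ha)
  have hl0 : l ≠ 0 := by
    rintro rfl
    rw [map_zero, ← pow_succ] at hl
    exact (hu.pow (n + 1)).ne_zero hl
  refine ⟨μ / l, (hu.pow n).mul_left_cancel ?_⟩
  rw [hμ, mul_smul_comm, hl, Algebra.smul_def, ← map_mul, div_mul_cancel₀ _ hl0]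

/-- The set of degrees of nonzero homogeneous elements, as a submonoid of the grading group. -/
def gradingSupport [Nontrivial D]
    (hmul : ∀ g h : G, ∀ a ∈ gr g, ∀ b ∈ gr h, a * b ∈ gr (g + h))
    (hdiv : ∀ g : G, ∀ a ∈ gr g, a ≠ 0 → IsUnit a) (h1 : (1 : D) ∈ gr 0) : AddSubmonoid G where
  carrier := {g | gr g ≠ ⊥}
  zero_mem' := (Submodule.ne_bot_iff _).2 ⟨1, h1, one_ne_zero⟩
  add_mem' := by
    intro g h hg hh
    obtain ⟨a, ha, ha0⟩ := (Submodule.ne_bot_iff _).1 hg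
    obtain ⟨b, hb, hb0⟩ := (Submodule.ne_bot_iff _).1 hh
    exact (Submodule.ne_bot_iff _).2 ⟨a * b, hmul _ _ _ ha _ hb,
      ((hdiv _ _ ha ha0).mul (hdiv _ _ hb hb0)).ne_zero⟩

/-- A degree-preserving algebra endomorphism acts on the components, which are spanned by the `X t`,
through a character of the support. -/
theorem exists_character {T : AddSubmonoid G} {X : T → D} (hX : ∀ t : T, X t ∈ gr t)
    (hXu : ∀ t, IsUnit (X t)) [Nontrivial D]
    (hspan : ∀ t : T, ∀ b ∈ gr t, ∃ μ : F, b = μ • X t) (h1 : (1 : D) ∈ gr 0)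
    (hmul : ∀ g h : G, ∀ a ∈ gr g, ∀ b ∈ gr h, a * b ∈ gr (g + h))
    (φ : D →ₗ[F] D) (hφ1 : φ 1 = 1) (hφmul : ∀ x y, φ (x * y) = φ x * φ y)
    (hφgr : ∀ g, ∀ x ∈ gr g, φ x ∈ gr g) :
    ∃ χ : Multiplicative T →* F, ∀ t : T, ∀ x ∈ gr t, φ x = χ (Multiplicative.ofAdd t) • x := by
  choose c hc using fun t : T => hspan t _ (hφgr t _ (hX t))
  have hall : ∀ t : T, ∀ x ∈ gr t, φ x = c t • x := by
    intro t x hx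
    obtain ⟨μ, rfl⟩ := hspan t x hx
    rw [map_smul, hc, smul_comm]
  refine ⟨⟨⟨fun t => c t.toAdd, ?_⟩, ?_⟩, fun t x hx => hall t x hx⟩
  · have h := hall 0 1 (by simpa using h1)
    rw [hφ1] at h
    have h2 : (1 : F) • (1 : D) = c 0 • 1 := by rwa [one_smul]
    exact (smul_left_injective F (one_ne_zero (α := D)) h2).symm
  · intro s t
    have h := hall (s.toAdd + t.toAdd) (X s.toAdd * X t.toAdd)
      (hmul _ _ _ (hX _) _ (hX _))
    rw [hφmul, hc, hc, smul_mul_smul_comm] at h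
    exact (smul_left_injective F ((hXu _).mul (hXu _)).ne_zero h).symm

end GradedDivision

/-- A finite monoid `M` has at most `|M|` characters, so an injective family of characters indexed by
`M` contains all of them. -/
theorem exists_eq_of_injective {F M : Type*} [Field F] [Monoid M] [Finite M]
    (β : M → (M →* F)) (hβ : Function.Injective β) (χ : M →* F) : ∃ s, β s = χ := by
  by_contra! hne
  have := Fintype.ofFinite M
  let f : Option M → (M →* F) := fun o => o.elim χ β
  have hf : Function.Injective f := by
    rintro (_ | a) (_ | b) h
    · rfl
    · exact absurd h.symm (hne b)
    · exact absurd h (hne a)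
    · exact congrArg some (hβ h)
  have hli := (linearIndependent_monoidHom M F).comp f hf
  have hcard := hli.fintype_card_le_finrank
  rw [Fintype.card_option, Module.finrank_fintype_fun_eq_card] at hcard
  omega

/-- Let `D` be a finite-dimensional central graded division algebra over an
algebraically closed field `F` of characteristic `0`, and let `τ` and `τ'` be two graded
involutions of `D`.  Then there is a nonzero homogeneous (invertible) element `d ∈ D` with
`τ'(x) = d · τ(x) · d⁻¹` for all `x ∈ D`. -/
theorem stmt_9 (F : Type) [Field F] [IsAlgClosed F] [CharZero F]
    (D : Type) [Ring D] [Nontrivial D] [Algebra F D] [FiniteDimensional F D]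
    (G : Type) [AddCommGroup G] [DecidableEq G]
    (gr : G → Submodule F D)
    (hinternal : DirectSum.IsInternal gr)
    (hmul : ∀ g h : G, ∀ a ∈ gr g, ∀ b ∈ gr h, a * b ∈ gr (g + h))
    (hdiv : ∀ g : G, ∀ a ∈ gr g, a ≠ 0 → IsUnit a)
    (hcentral : Subalgebra.center F D = ⊥)
    (τ τ' : D →ₗ[F] D)
    (hanti : ∀ x y : D, τ (x * y) = τ y * τ x)
    (hinv : ∀ x : D, τ (τ x) = x)
    (hgraded : ∀ g : G, Submodule.map τ (gr g) = gr g)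
    (hanti' : ∀ x y : D, τ' (x * y) = τ' y * τ' x)
    (hinv' : ∀ x : D, τ' (τ' x) = x)
    (hgraded' : ∀ g : G, Submodule.map τ' (gr g) = gr g) :
    ∃ d d' : D, (∃ h : G, d ∈ gr h) ∧ d ≠ 0 ∧ d * d' = 1 ∧ d' * d = 1 ∧
      ∀ x : D, τ' x = d * τ x * d' := by
  have hind : iSupIndep gr := hinternal.submodule_iSupIndep
  have htop : iSup gr = ⊤ := hinternal.submodule_iSup_eq_top
  have hext : ∀ f f' : D →ₗ[F] D, (∀ g, ∀ x ∈ gr g, f x = f' x) → f = f' := by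
    intro f f' h
    have hle : iSup gr ≤ LinearMap.eqLocus f f' := iSup_le fun g x hx => h g x hx
    rw [htop] at hle
    exact LinearMap.ext fun x => hle (Submodule.mem_top (x := x))
  have hne : ∃ g, gr g ≠ ⊥ := by
    by_contra! hall
    have hbot : iSup gr = ⊥ := by simp [hall]
    exact bot_ne_top (hbot.symm.trans htop)
  obtain ⟨g₀, hg₀⟩ := hne
  obtain ⟨a₀, ha₀, ha₀0⟩ := (Submodule.ne_bot_iff _).1 hg₀
  have h1 : (1 : D) ∈ gr 0 := one_mem_gr_zero hind hmul ha₀ (hdiv _ _ ha₀ ha₀0)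
  let T : AddSubmonoid G := gradingSupport hmul hdiv h1
  have hTfin : Finite T := (finite_support hind).to_subtype
  choose X hX hX0 using fun t : T => (Submodule.ne_bot_iff _).1 t.2
  have hXu : ∀ t, IsUnit (X t) := fun t => hdiv _ _ (hX t) (hX0 t)
  choose u hu using hXu
  have hspan : ∀ t : T, ∀ b ∈ gr t, ∃ μ : F, b = μ • X t := fun t b hb =>
    exists_smul_of_mem hind hmul hdiv (hX t) (hX0 t) hb
  have hchar := exists_character hX (fun t => ⟨u t, hu t⟩) hspan h1 hmul
  -- Two linear maps which act on the components through the same character are equal.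
  have hchar_ext : ∀ (χ : Multiplicative T →* F) (f f' : D →ₗ[F] D),
      (∀ t : T, ∀ x ∈ gr t, f x = χ (Multiplicative.ofAdd t) • x) →
      (∀ t : T, ∀ x ∈ gr t, f' x = χ (Multiplicative.ofAdd t) • x) → f = f' := by
    intro χ f f' hf hf'
    refine hext f f' fun g x hx => ?_
    by_cases hx0 : x = 0
    · simp [hx0]
    · have hg : g ∈ T := (Submodule.ne_bot_iff _).2 ⟨x, hx, hx0⟩
      rw [hf ⟨g, hg⟩ x hx, hf' ⟨g, hg⟩ x hx]
  let conj : T → (D →ₗ[F] D) := fun s =>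
    LinearMap.mulRight F (↑(u s)⁻¹ : D) ∘ₗ LinearMap.mulLeft F (u s : D)
  have hconj : ∀ s x, conj s x = u s * x * ↑(u s)⁻¹ := fun s x => rfl
  have hconjgr : ∀ s, ∀ g, ∀ x ∈ gr g, conj s x ∈ gr g := by
    intro s g x hx
    by_cases hx0 : x = 0
    · simp [hx0]
    -- `X s * x` and `x * X s` lie in the same one-dimensional component.
    have h2 : (u s : D) * x ∈ gr (g + s) := by
      rw [hu, add_comm]
      exact hmul _ _ _ (hX s) _ hx
    have h3 : x * (u s : D) ∈ gr (g + s) := by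
      rw [hu]
      exact hmul _ _ _ hx _ (hX s)
    have h4 : x * (u s : D) ≠ 0 := ((hdiv _ _ hx hx0).mul (u s).isUnit).ne_zero
    obtain ⟨μ, hμ⟩ := exists_smul_of_mem hind hmul hdiv h3 h4 h2
    rw [hconj, hμ, smul_mul_assoc, mul_assoc, Units.mul_inv, mul_one]
    exact (gr g).smul_mem _ hx
  choose β hβ using fun s => hchar (conj s) (by simp [hconj])
    (fun x y => by simp [hconj, mul_assoc]) (hconjgr s)
  have hβinj : Function.Injective β := by
    intro s t hst
    have hc : conj s = conj t := hchar_ext (β s) _ _ (hβ s) (by rw [hst]; exact hβ t)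
    have hz : (↑(u t)⁻¹ * u s : D) ∈ Subalgebra.center F D := by
      rw [Subalgebra.mem_center_iff]
      intro x
      have h := LinearMap.congr_fun hc x
      rw [hconj, hconj, Units.mul_inv_eq_iff_eq_mul] at h
      rw [mul_assoc, h]
      simp [mul_assoc]
    rw [hcentral, Algebra.mem_bot] at hz
    obtain ⟨μ, hμ⟩ := hz
    have hXs : X s = μ • X t := by
      rw [← hu, ← hu, Algebra.smul_def, Algebra.commutes, hμ, Units.mul_inv_cancel_left]
    by_contra hne
    have hdis := hind.pairwiseDisjoint (fun h => hne (Subtype.ext h) : (s : G) ≠ t)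
    refine hX0 s (Submodule.disjoint_def.1 hdis _ (hX s) ?_)
    rw [hXs]
    exact (gr t).smul_mem _ (hX t)
  have hone : ∀ σ : D →ₗ[F] D, (∀ x y, σ (x * y) = σ y * σ x) → (∀ x, σ (σ x) = x) →
      σ 1 = 1 := by
    intro σ h h'
    have h2 := h 1 (σ 1)
    rw [one_mul, h', one_mul] at h2
    exact h2.symm
  obtain ⟨χ, hχ⟩ := hchar (τ' ∘ₗ τ) (by simp [hone τ hanti hinv, hone τ' hanti' hinv'])
    (fun x y => by simp [hanti, hanti'])
    (fun g x hx => by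
      have h2 : τ x ∈ gr g := by
        rw [← hgraded g]
        exact Submodule.mem_map_of_mem hx
      change τ' (τ x) ∈ gr g
      rw [← hgraded' g]
      exact Submodule.mem_map_of_mem h2)
  obtain ⟨s, hs⟩ := exists_eq_of_injective (M := Multiplicative T) (fun s => β s.toAdd)
    (fun s t h => hβinj h) χ
  have hfinal : τ' ∘ₗ τ = conj s.toAdd :=
    hchar_ext χ _ _ hχ (by rw [← hs]; exact hβ _)
  refine ⟨u s.toAdd, ↑(u s.toAdd)⁻¹, ⟨s.toAdd, ?_⟩, Units.ne_zero _, Units.mul_inv _,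
    Units.inv_mul _, fun x => ?_⟩
  · rw [hu]
    exact hX _
  · have h := LinearMap.congr_fun hfinal (τ x)
    rwa [LinearMap.comp_apply, hinv, hconj] at h
end

section
/- Let G be an abelian group, D a finite-dimensional central G-graded division algebra over F with support H, V a finite-dimensional G-graded right D-module, and let φ be a G-graded antiautomorphism of R = End_D(V) with the induced grading (i.e., φ is an antiautomorphism of R with φ(R_g) = R_g for all g ∈ G). Then there exist a graded involution τ of D, an element g ∈ G, and a τ-sesquilinear nondegenerate homogeneous form B: V × V → D of degree g such that B(rv, w) = B(v, φ(r)w) for all r ∈ R and v,w ∈ V. -/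
/-!
The form is built from rank-one operators. Take a nonzero homogeneous `v₀ ∈ V` and a homogeneous
`D`-linear `f : V → D` with `f v₀ = 1` (`exists_dual`). For `v ∈ V` let `r_v = v · f(-)`
(`rankOne`), and let `e = r_{v₀}`, an idempotent of degree `0`. The degree-`0` part of `e R e` is
isomorphic to `D₀`, a division ring, so `φ e` admits no proper homogeneous sub-idempotent. Hence
`φ(e) V = w₀ D` for any nonzero homogeneous `w₀` in it. Since `r_v = r_v e`, the operator `φ (r_v)`
takes values in `w₀ D`, and `B` is defined by `φ (r_v) w = w₀ · B(v, w)`. From `r_{s v} = s r_v`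
one gets `B(s v, w) = B(v, φ(s) w)`, and sesquilinearity holds with
`τ d = B(v₀ d, w₀)`, a degree-preserving antiautomorphism of `D`.

Such a `τ` is automatically an involution (`graded_anti_involutive`): components of `D` are at most
one-dimensional (`gr_one_dim`), the commutation factors are forced to be `± 1`, so squares of
homogeneous elements are central, hence scalars, and `τ` acts by `± 1` on each component.
-/

/-! ### Homogeneous components -/

/-- `P g` is the projection onto the homogeneous component `M g` along the other components of the
grading `M`. -/
structure GradingProj {F G V : Type} [Field F] [AddCommGroup V] [Module F V]
    (M : G → Submodule F V) (P : G → V →ₗ[F] V) : Prop where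
  mem : ∀ g v, P g v ∈ M g
  same : ∀ g, ∀ v ∈ M g, P g v = v
  ne : ∀ g h, h ≠ g → ∀ v ∈ M h, P g v = 0
  ext_zero : ∀ v, (∀ g, P g v = 0) → v = 0

lemma exists_gradingProj {F G V : Type} [Field F] [DecidableEq G] [AddCommGroup V] [Module F V]
    {M : G → Submodule F V} (hM : DirectSum.IsInternal M) :
    ∃ P : G → V →ₗ[F] V, GradingProj M P := by
  let := hM.chooseDecomposition
  refine ⟨fun g => (M g).subtype ∘ₗ DirectSum.component F G (fun i => M i) g ∘ₗ
    (DirectSum.decomposeLinearEquiv M).toLinearMap, ?_, ?_, ?_, ?_⟩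
  · intro g v
    exact Submodule.coe_mem _
  · intro g v hv
    exact DirectSum.decompose_of_mem_same M hv
  · intro g h hne v hv
    exact DirectSum.decompose_of_mem_ne M hv hne
  · intro v hv
    apply (DirectSum.decompose M).injective
    rw [DirectSum.decompose_zero]
    ext g
    exact hv g

lemma GradingProj.mem_of {F G V : Type} [Field F] [AddCommGroup V] [Module F V]
    {M : G → Submodule F V} {P : G → V →ₗ[F] V} (hP : GradingProj M P) {k : G} {x : V}
    (hx : ∀ h, h ≠ k → P h x = 0) : x ∈ M k := by
  have : x - P k x = 0 := by
    apply hP.ext_zero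
    intro g
    by_cases hg : g = k
    · subst hg
      rw [map_sub, hP.same g _ (hP.mem g x), sub_self]
    · rw [map_sub, hx g hg, hP.ne g k (Ne.symm hg) _ (hP.mem k x), sub_self]
  rw [sub_eq_zero.1 this]
  exact hP.mem k x

lemma graded_induction {F G V : Type} [Field F] [DecidableEq G] [Nonempty G] [AddCommGroup V]
    [Module F V] {M : G → Submodule F V} (hM : DirectSum.IsInternal M) {p : V → Prop}
    (hom : ∀ g, ∀ v ∈ M g, p v) (add_mem : ∀ v w, p v → p w → p (v + w)) (v : V) : p v := by
  have hv : v ∈ iSup M := by rw [hM.submodule_iSup_eq_top]; trivial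
  exact Submodule.iSup_induction M (motive := p) hv hom (hom (Classical.arbitrary G) 0 (M _).zero_mem) add_mem

lemma GradingProj.exists_functional {F G V : Type} [Field F] [AddCommGroup V] [Module F V]
    {M : G → Submodule F V} {P : G → V →ₗ[F] V} (hP : GradingProj M P) {k : G} {w : V}
    (hw : w ∈ M k) (hw0 : w ≠ 0) :
    ∃ l : V →ₗ[F] F, l w = 1 ∧ ∀ h, h ≠ k → ∀ v ∈ M h, l v = 0 := by
  obtain ⟨f, hf⟩ := Module.Projective.exists_dual_ne_zero F hw0
  refine ⟨(f w)⁻¹ • (f ∘ₗ P k), ?_, ?_⟩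
  · simp [hP.same k w hw, hf]
  · intro h hne v hv
    simp [hP.ne k h hne v hv]

/-! ### Graded division algebras -/

section GradedDivision

variable {F G D : Type} [Field F] [AddCommGroup G] [DecidableEq G] [Ring D] [Algebra F D]
  {gr : G → Submodule F D}

lemma gradingProj_mul {P : G → D →ₗ[F] D} (hP : GradingProj gr P)
    (hi : DirectSum.IsInternal gr)
    (hmul : ∀ g h : G, ∀ a ∈ gr g, ∀ b ∈ gr h, a * b ∈ gr (g + h))
    {h : G} {a : D} (ha : a ∈ gr h) (k : G) (b : D) : P (h + k) (a * b) = a * P k b := by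
  induction b using graded_induction hi with
  | hom g b hb =>
    by_cases hg : g = k
    · subst hg
      rw [hP.same g b hb, hP.same _ _ (hmul _ _ _ ha _ hb)]
    · rw [hP.ne k g hg b hb, hP.ne _ (h + g) (by simpa using hg) _ (hmul _ _ _ ha _ hb), mul_zero]
  | add_mem x y hx hy => rw [mul_add, map_add, map_add, hx, hy, mul_add]

lemma gradingProj_mul_right {P : G → D →ₗ[F] D} (hP : GradingProj gr P)
    (hi : DirectSum.IsInternal gr)
    (hmul : ∀ g h : G, ∀ a ∈ gr g, ∀ b ∈ gr h, a * b ∈ gr (g + h))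
    {h : G} {a : D} (ha : a ∈ gr h) (k : G) (b : D) : P (k + h) (b * a) = P k b * a := by
  induction b using graded_induction hi with
  | hom g b hb =>
    by_cases hg : g = k
    · subst hg
      rw [hP.same g b hb, hP.same _ _ (hmul _ _ _ hb _ ha)]
    · rw [hP.ne k g hg b hb, hP.ne _ (g + h) (by simpa using hg) _ (hmul _ _ _ hb _ ha), zero_mul]
  | add_mem x y hx hy => rw [add_mul, map_add, map_add, hx, hy, add_mul]

/-- The degree-`0` component of `1` is a right identity, hence equals `1`. -/
lemma one_mem_gr (hi : DirectSum.IsInternal gr)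
    (hmul : ∀ g h : G, ∀ a ∈ gr g, ∀ b ∈ gr h, a * b ∈ gr (g + h)) : (1 : D) ∈ gr 0 := by
  obtain ⟨P, hP⟩ := exists_gradingProj hi
  have key : ∀ x : D, x * P 0 1 = x := by
    intro x
    induction x using graded_induction hi with
    | hom g x hx =>
      rw [← gradingProj_mul hP hi hmul hx 0 1, add_zero, mul_one, hP.same g x hx]
    | add_mem x y hx hy => rw [add_mul, hx, hy]
  rw [← key 1, one_mul]
  exact hP.mem 0 1

lemma exists_homogeneous_inv (hi : DirectSum.IsInternal gr)
    (hmul : ∀ g h : G, ∀ a ∈ gr g, ∀ b ∈ gr h, a * b ∈ gr (g + h))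
    (hdiv : ∀ g : G, ∀ a ∈ gr g, a ≠ 0 → IsUnit a) {h : G} {a : D} (ha : a ∈ gr h)
    (ha0 : a ≠ 0) : ∃ b ∈ gr (-h), a * b = 1 ∧ b * a = 1 := by
  obtain ⟨P, hP⟩ := exists_gradingProj hi
  obtain ⟨u, rfl⟩ := hdiv h a ha ha0
  have h1 : (u : D) * P (-h) (↑u⁻¹ : D) = 1 := by
    rw [← gradingProj_mul hP hi hmul ha, Units.mul_inv, add_neg_cancel,
      hP.same 0 1 (one_mem_gr hi hmul)]
  have h2 : P (-h) (↑u⁻¹ : D) = ↑u⁻¹ := by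
    rw [← Units.inv_mul_cancel_left u (P (-h) (↑u⁻¹ : D)), h1, mul_one]
  exact ⟨↑u⁻¹, h2 ▸ hP.mem _ _, u.mul_inv, u.inv_mul⟩

/-- Over an algebraically closed field, homogeneous components of a finite-dimensional graded
division algebra have dimension at most one: the identity component is a finite-dimensional
division algebra, hence `F`, and any nonzero homogeneous element translates the others into it. -/
lemma gr_one_dim [IsAlgClosed F] [FiniteDimensional F D] [Nontrivial D]
    (hi : DirectSum.IsInternal gr)
    (hmul : ∀ g h : G, ∀ a ∈ gr g, ∀ b ∈ gr h, a * b ∈ gr (g + h))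
    (hdiv : ∀ g : G, ∀ a ∈ gr g, a ≠ 0 → IsUnit a) {h : G} {a b : D} (ha : a ∈ gr h)
    (ha0 : a ≠ 0) (hb : b ∈ gr h) : ∃ c : F, b = c • a := by
  obtain ⟨a', ha', -, h2⟩ := exists_homogeneous_inv hi hmul hdiv ha ha0
  have hx : b * a' ∈ gr 0 := by simpa using hmul _ _ _ hb _ ha'
  obtain ⟨c, hc⟩ := spectrum.nonempty_of_isAlgClosed_of_finiteDimensional F (b * a')
  refine ⟨c, ?_⟩
  have h0 : c • (1 : D) - b * a' = 0 := by
    by_contra hne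
    apply spectrum.mem_iff.1 hc
    rw [Algebra.algebraMap_eq_smul_one]
    exact hdiv 0 _ (sub_mem ((gr 0).smul_mem c (one_mem_gr hi hmul)) hx) hne
  calc b = b * a' * a := by rw [mul_assoc, h2, mul_one]
    _ = c • a := by rw [← sub_eq_zero.1 h0, smul_mul_assoc, one_mul]

/-- A degree-preserving unital anti-endomorphism `τ` acts on `gr h` by a scalar. Applying it to
`a * b = β • (b * a)` gives `β² = 1`, so squares of homogeneous elements are central, that is
scalars; since `τ` fixes scalars, it acts on each component by `± 1`. -/
lemma graded_anti_involutive [IsAlgClosed F] [FiniteDimensional F D] [Nontrivial D]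
    (hi : DirectSum.IsInternal gr)
    (hmul : ∀ g h : G, ∀ a ∈ gr g, ∀ b ∈ gr h, a * b ∈ gr (g + h))
    (hdiv : ∀ g : G, ∀ a ∈ gr g, a ≠ 0 → IsUnit a)
    (hcentral : Subalgebra.center F D = ⊥) (τ : D →ₗ[F] D)
    (hτ : ∀ x y : D, τ (x * y) = τ y * τ x) (hτ1 : τ 1 = 1)
    (hτg : ∀ h : G, ∀ x ∈ gr h, τ x ∈ gr h) (x : D) : τ (τ x) = x := by
  -- on each line `F • a` of homogeneous elements, `τ` is a nonzero scalar
  have hscal : ∀ h : G, ∀ a ∈ gr h, a ≠ 0 → ∃ c : F, c ≠ 0 ∧ τ a = c • a := by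
    intro h a ha ha0
    obtain ⟨c, hc⟩ := gr_one_dim hi hmul hdiv ha ha0 (hτg h a ha)
    refine ⟨c, ?_, hc⟩
    rintro rfl
    obtain ⟨a', -, h1, -⟩ := exists_homogeneous_inv hi hmul hdiv ha ha0
    have := hτ a a'
    rw [h1, hτ1, hc, zero_smul, mul_zero] at this
    exact one_ne_zero this
  have hsq : ∀ h : G, ∀ a ∈ gr h, a ≠ 0 → ∀ y, a * a * y = y * (a * a) := by
    intro h a ha ha0 y
    induction y using graded_induction hi with
    | hom k b hb =>
      by_cases hb0 : b = 0
      · simp [hb0]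
      obtain ⟨c, hc, hca⟩ := hscal h a ha ha0
      obtain ⟨d, hd, hdb⟩ := hscal k b hb hb0
      have hba : b * a ∈ gr (h + k) := by rw [add_comm]; exact hmul _ _ _ hb _ ha
      have hba0 : b * a ≠ 0 := by
        rw [(hdiv h a ha ha0).mul_left_eq_zero.ne]
        exact hb0
      obtain ⟨β, hβ⟩ := gr_one_dim hi hmul hdiv hba hba0 (hmul _ _ _ ha _ hb)
      have h1 : b * a = β • (a * b) := by
        have h2 := congrArg τ hβ
        rw [map_smul, hτ, hτ, hca, hdb] at h2
        simp only [smul_mul_assoc, mul_smul_comm, smul_smul] at h2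
        have h3 : (d * c) • (b * a) = (d * c) • (β • (a * b)) := by
          rw [smul_smul]
          convert h2 using 2 <;> ring
        exact smul_right_injective D (mul_ne_zero hd hc) h3
      calc a * a * b = a * (a * b) := mul_assoc _ _ _
        _ = β • (a * b * a) := by rw [hβ, mul_smul_comm, ← mul_assoc, hβ]
        _ = b * (a * a) := by rw [← smul_mul_assoc, ← h1, mul_assoc]
    | add_mem x y hx hy => rw [mul_add, add_mul, hx, hy]
  induction x using graded_induction hi with
  | hom h a ha =>
    by_cases ha0 : a = 0
    · simp [ha0]
    obtain ⟨c, hc, hca⟩ := hscal h a ha ha0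
    have hz : a * a ∈ Subalgebra.center F D :=
      Subalgebra.mem_center_iff.2 fun y => (hsq h a ha ha0 y).symm
    rw [hcentral, Algebra.mem_bot] at hz
    obtain ⟨m, hm⟩ := hz
    have hu := hdiv h a ha ha0
    have h1 : (c * c) • (a * a) = a * a := by
      have h2 : τ (a * a) = a * a := by
        rw [← hm, Algebra.algebraMap_eq_smul_one, map_smul, hτ1]
      rwa [hτ, hca, smul_mul_assoc, mul_smul_comm, smul_smul] at h2
    rw [← smul_mul_assoc] at h1
    rw [hca, map_smul, hca, smul_smul]
    exact hu.mul_right_cancel h1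
  | add_mem x y hx hy => rw [map_add, map_add, hx, hy]

end GradedDivision

/-! ### Homogeneous dual vectors and rank-one operators -/

section GradedModule

variable {F G D V : Type} [Field F] [AddCommGroup G] [DecidableEq G] [Ring D] [Algebra F D]
  {gr : G → Submodule F D} [AddCommGroup V] [Module F V] [Module Dᵐᵒᵖ V]
  [SMulCommClass Dᵐᵒᵖ F V] {vgr : G → Submodule F V}

/-- If `ε : D → F` has `ε 1 = 1` and vanishes off degree `0`, then `(x, d) ↦ ε (x * d)` is
nondegenerate, so a functional `l` on `V` determines a unique `D`-linear `f : V → D` with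
`ε (f v * d) = l (v d)`. Taking `l` supported in degree `k` makes `f` homogeneous of degree `-k`. -/
lemma exists_dual [IsScalarTower F Dᵐᵒᵖ V] [FiniteDimensional F D] [Nontrivial D]
    (hi : DirectSum.IsInternal gr)
    (hmul : ∀ g h : G, ∀ a ∈ gr g, ∀ b ∈ gr h, a * b ∈ gr (g + h))
    (hdiv : ∀ g : G, ∀ a ∈ gr g, a ≠ 0 → IsUnit a)
    (hV : DirectSum.IsInternal vgr)
    (hsmul : ∀ (g h : G) (d : D), d ∈ gr h → ∀ v ∈ vgr g, MulOpposite.op d • v ∈ vgr (g + h))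
    {k : G} {w : V} (hw : w ∈ vgr k) (hw0 : w ≠ 0) :
    ∃ f : V →ₗ[Dᵐᵒᵖ] D, f w = 1 ∧ ∀ a, ∀ v ∈ vgr a, f v ∈ gr (a - k) := by
  obtain ⟨P, hP⟩ := exists_gradingProj hi
  obtain ⟨Q, hQ⟩ := exists_gradingProj hV
  have h1 := one_mem_gr hi hmul
  obtain ⟨ε, hε1, hε⟩ := hP.exists_functional h1 one_ne_zero
  obtain ⟨l, hl1, hl⟩ := hQ.exists_functional hw hw0
  have hεP : ∀ x, ε x = ε (P 0 x) := by
    intro x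
    induction x using graded_induction hi with
    | hom g x hx =>
      by_cases hg : g = 0
      · subst hg; rw [hP.same 0 x hx]
      · rw [hP.ne 0 g hg x hx, hε g hg x hx, map_zero]
    | add_mem x y hx hy => rw [map_add, map_add, map_add, hx, hy]
  -- a nonzero component of `x` is detected by `ε` after multiplication by its inverse
  have hdetect : ∀ x h, P h x ≠ 0 → ∃ b ∈ gr (-h), ε (x * b) = 1 := by
    intro x h hx
    obtain ⟨b, hb, hb1, -⟩ := exists_homogeneous_inv hi hmul hdiv (hP.mem h x) hx
    refine ⟨b, hb, ?_⟩
    rw [hεP, ← add_neg_cancel h, gradingProj_mul_right hP hi hmul hb, hb1, hε1]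
  let T : D →ₗ[F] Module.Dual F D := (LinearMap.mul F D).compr₂ ε
  have hT : ∀ x d, T x d = ε (x * d) := fun x d => rfl
  have hTinj : Function.Injective T := by
    rw [injective_iff_map_eq_zero]
    intro x hx
    apply hP.ext_zero
    intro h
    by_contra hne
    obtain ⟨b, -, hb⟩ := hdetect x h hne
    rw [← hT, hx, LinearMap.zero_apply] at hb
    exact zero_ne_one hb
  have hTsurj : Function.Surjective T :=
    (LinearMap.injective_iff_surjective_of_finrank_eq_finrank
      Subspace.dual_finrank_eq.symm).1 hTinj
  have hex : ∀ v : V, ∃ x : D, ∀ d, ε (x * d) = l (MulOpposite.op d • v) := by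
    intro v
    let m : Module.Dual F D :=
      { toFun := fun d => l (MulOpposite.op d • v)
        map_add' := fun x y => by rw [MulOpposite.op_add, add_smul, map_add]
        map_smul' := fun c x => by
          rw [MulOpposite.op_smul, smul_assoc, map_smul, RingHom.id_apply] }
    obtain ⟨x, hx⟩ := hTsurj m
    exact ⟨x, fun d => by rw [← hT, hx]; rfl⟩
  choose f hf using hex
  have huniq : ∀ x y : D, (∀ d, ε (x * d) = ε (y * d)) → x = y := fun x y h =>
    hTinj (LinearMap.ext h)
  let f' : V →ₗ[Dᵐᵒᵖ] D :=
    { toFun := f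
      map_add' := fun v w => huniq _ _ fun d => by
        rw [add_mul, map_add, hf, hf, hf, smul_add, map_add]
      map_smul' := fun c v => huniq _ _ fun d => by
        rw [hf, RingHom.id_apply, ← MulOpposite.op_unop c, op_smul_eq_mul, mul_assoc, hf,
          MulOpposite.op_mul, mul_smul] }
  have hf' : ∀ a, ∀ v ∈ vgr a, f' v ∈ gr (a - k) := by
    intro a v hv
    apply hP.mem_of
    intro h hne
    by_contra hh
    obtain ⟨b, hb, hb1⟩ := hdetect _ _ hh
    have h2 : ε (f' v * b) = l (MulOpposite.op b • v) := hf v b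
    rw [hb1, hl (a + -h) _ _ (hsmul a _ b hb v hv)] at h2
    · exact one_ne_zero h2
    · rintro rfl
      exact hne (by abel)
  have hw1 : f' w ∈ gr 0 := by simpa using hf' k w hw
  have hw2 : f' w ≠ 0 := by
    intro h0
    have h2 : ε (f' w * 1) = l (MulOpposite.op (1 : D) • w) := hf w 1
    rw [h0, zero_mul, map_zero, MulOpposite.op_one, one_smul, hl1] at h2
    exact zero_ne_one h2
  obtain ⟨b, hb, -, hb1⟩ := exists_homogeneous_inv hi hmul hdiv hw1 hw2
  refine ⟨{ toFun := fun v => b * f' v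
            map_add' := fun v w => by rw [map_add, mul_add]
            map_smul' := fun c v => by
              rw [map_smul, RingHom.id_apply, ← MulOpposite.op_unop c, op_smul_eq_mul,
                op_smul_eq_mul, mul_assoc] }, hb1, ?_⟩
  intro a v hv
  have := hmul _ _ _ hb _ (hf' a v hv)
  rwa [neg_zero, zero_add] at this

/-- The rank-one operator `u ↦ v · f(u)`, linear in `v`. -/
def rankOne (F : Type) {D V : Type} [Field F] [Ring D] [Algebra F D] [AddCommGroup V]
    [Module F V] [Module Dᵐᵒᵖ V] [SMulCommClass Dᵐᵒᵖ F V] (f : V →ₗ[Dᵐᵒᵖ] D) :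
    V →ₗ[F] Module.End Dᵐᵒᵖ V where
  toFun v :=
    { toFun := fun u => MulOpposite.op (f u) • v
      map_add' := fun x y => by rw [map_add, MulOpposite.op_add, add_smul]
      map_smul' := fun c x => by
        rw [map_smul, RingHom.id_apply, ← MulOpposite.op_unop c, op_smul_eq_mul,
          MulOpposite.op_mul, mul_smul] }
  map_add' v w := by ext u; exact smul_add _ _ _
  map_smul' c v := by ext u; exact smul_comm _ _ _

lemma rankOne_apply (f : V →ₗ[Dᵐᵒᵖ] D) (v u : V) :
    rankOne F f v u = MulOpposite.op (f u) • v := rfl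

lemma mul_rankOne (f : V →ₗ[Dᵐᵒᵖ] D) (r : Module.End Dᵐᵒᵖ V) (v : V) :
    r * rankOne F f v = rankOne F f (r v) := by
  ext u
  simp [rankOne_apply]

end GradedModule


/-- Let `G` be an abelian group, `D` a finite-dimensional central
`G`-graded division algebra over `F` with support `H`, `V` a finite-dimensional `G`-graded
(free) right `D`-module, and `φ` a `G`-graded antiautomorphism of `R = End_D(V)` with the
induced grading.  Then there are a graded involution `τ` of `D`, an element `g ∈ G`, and a
`τ`-sesquilinear nondegenerate homogeneous form `B : V × V → D` of degree `g` such that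
`B(rv, w) = B(v, φ(r)w)` for all `r ∈ R` and `v, w ∈ V`.

Right `D`-modules are modeled as left `Dᵐᵒᵖ`-modules; `v·d` is `MulOpposite.op d • v`. -/
theorem stmt_10 (F : Type) [Field F] [IsAlgClosed F] [CharZero F]
    (G : Type) [AddCommGroup G] [DecidableEq G]
    (D : Type) [Ring D] [Nontrivial D] [Algebra F D] [FiniteDimensional F D]
    (gr : G → Submodule F D)
    (hDinternal : DirectSum.IsInternal gr)
    (hDmul : ∀ g h : G, ∀ a ∈ gr g, ∀ b ∈ gr h, a * b ∈ gr (g + h))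
    (hDdiv : ∀ g : G, ∀ a ∈ gr g, a ≠ 0 → IsUnit a)
    (hDcentral : Subalgebra.center F D = ⊥)
    (V : Type) [AddCommGroup V] [Nontrivial V] [Module F V] [FiniteDimensional F V]
    [Module Dᵐᵒᵖ V] [IsScalarTower F Dᵐᵒᵖ V] [SMulCommClass Dᵐᵒᵖ F V]
    [Module.Free Dᵐᵒᵖ V]
    (vgr : G → Submodule F V)
    (hVinternal : DirectSum.IsInternal vgr)
    (hVsmul : ∀ (g h : G) (d : D), d ∈ gr h → ∀ v ∈ vgr g,
      MulOpposite.op d • v ∈ vgr (g + h))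
    (φ : Module.End Dᵐᵒᵖ V →ₗ[F] Module.End Dᵐᵒᵖ V)
    (hφbij : Function.Bijective φ)
    (hφanti : ∀ r s : Module.End Dᵐᵒᵖ V, φ (r * s) = φ s * φ r)
    (hφgraded : ∀ (g : G) (r : Module.End Dᵐᵒᵖ V),
      (∀ g' : G, ∀ v ∈ vgr g', r v ∈ vgr (g + g')) ↔
      (∀ g' : G, ∀ v ∈ vgr g', φ r v ∈ vgr (g + g'))) :
    ∃ (τ : D →ₗ[F] D) (g : G) (B : V →ₗ[F] V →ₗ[F] D),
      -- τ is a graded involution of D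
      (∀ x y : D, τ (x * y) = τ y * τ x) ∧
      (∀ x : D, τ (τ x) = x) ∧
      (∀ h : G, ∀ x ∈ gr h, τ x ∈ gr h) ∧
      -- B is homogeneous of degree g
      (∀ g₁ g₂ : G, ∀ v ∈ vgr g₁, ∀ w ∈ vgr g₂, B v w ∈ gr (g₁ + g₂ + g)) ∧
      -- B is τ-sesquilinear
      (∀ (d : D) (v w : V), B (MulOpposite.op d • v) w = τ d * B v w) ∧
      (∀ (d : D) (v w : V), B v (MulOpposite.op d • w) = B v w * d) ∧
      -- B is nondegenerate
      (∀ v : V, (∀ w : V, B v w = 0) → v = 0) ∧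
      (∀ w : V, (∀ v : V, B v w = 0) → w = 0) ∧
      -- φ is the adjoint with respect to B
      (∀ (r : Module.End Dᵐᵒᵖ V) (v w : V), B (r v) w = B v (φ r w)) := by
  obtain ⟨Q, hQ⟩ := exists_gradingProj hVinternal
  -- every nonzero vector has a nonzero homogeneous component
  have hcomp : ∀ v : V, v ≠ 0 → ∃ k, Q k v ≠ 0 := by
    intro v hv
    by_contra! hcon
    exact hv (hQ.ext_zero v hcon)
  obtain ⟨v', hv'⟩ := exists_ne (0 : V)
  obtain ⟨g₀, hg₀⟩ := hcomp v' hv'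
  obtain ⟨v₀, hv₀, hv₀0⟩ : ∃ v₀ ∈ vgr g₀, v₀ ≠ 0 := ⟨_, hQ.mem g₀ v', hg₀⟩
  have hdual := fun k w => exists_dual (k := k) (w := w) hDinternal hDmul hDdiv hVinternal hVsmul
  obtain ⟨f, hf1, hf⟩ := hdual g₀ v₀ hv₀ hv₀0
  have hrdeg : ∀ a, ∀ v ∈ vgr a, ∀ g', ∀ u ∈ vgr g', rankOne F f v u ∈ vgr (a - g₀ + g') := by
    intro a v hv g' u hu
    have := hVsmul a _ _ (hf g' u hu) v hv
    rwa [show a - g₀ + g' = a + (g' - g₀) by abel]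
  have hrv₀ : ∀ v, rankOne F f v v₀ = v := fun v => by
    rw [rankOne_apply, hf1, MulOpposite.op_one, one_smul]
  -- `e` is the projection onto `v₀ D`
  set e := rankOne F f v₀ with he
  have hre : ∀ v, rankOne F f v * e = rankOne F f v := fun v => by
    rw [he, mul_rankOne, hrv₀]
  have hee : φ e * φ e = φ e := by rw [← hφanti, hre]
  have hφ0 : ∀ r, φ r = 0 → r = 0 := fun r hr => hφbij.1 (hr.trans (map_zero φ).symm)
  have he0 : e ≠ 0 := fun h => hv₀0 (by rw [← hrv₀ v₀, ← he, h, LinearMap.zero_apply])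
  have hφedeg : ∀ g', ∀ u ∈ vgr g', φ e u ∈ vgr g' := by
    intro g' u hu
    have := (hφgraded 0 e).1 (fun g' u hu => by simpa using hrdeg g₀ v₀ hv₀ g' u hu) g' u hu
    rwa [zero_add] at this
  obtain ⟨k, w₀, hw₀, hw₀0, hφw₀⟩ : ∃ k, ∃ w₀ ∈ vgr k, w₀ ≠ 0 ∧ φ e w₀ = w₀ := by
    have : ∃ g, ∃ u ∈ vgr g, φ e u ≠ 0 := by
      by_contra! hcon
      refine he0 (hφ0 e (LinearMap.ext fun u => ?_))
      induction u using graded_induction hVinternal with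
      | hom g u hu => exact hcon g u hu
      | add_mem x y hx hy => rw [map_add, hx, hy, map_add]
    obtain ⟨g, u, hu, hne⟩ := this
    exact ⟨g, φ e u, hφedeg g u hu, hne, by rw [← Module.End.mul_apply, hee]⟩
  obtain ⟨f', hf'1, hf'⟩ := hdual k w₀ hw₀ hw₀0
  -- `q` is the projection onto `w₀ D` cut down by `φ e`; it is a nonzero homogeneous idempotent
  -- of `φ(e) R φ(e)`, whose degree-zero part is a division ring, so it is `φ e`
  have hq : rankOne F f' w₀ * φ e = φ e := by
    obtain ⟨p, hp⟩ := hφbij.2 (rankOne F f' w₀ * φ e)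
    have hqq : φ p * φ p = φ p := by
      ext u
      simp [hp, rankOne_apply, hφw₀, hf'1]
    have hpp : p * p = p := hφbij.1 (by rw [hφanti, hqq])
    have hep : e * p = p := hφbij.1 (by rw [hφanti, hp, mul_assoc, hee])
    have hpe : p * e = p := hφbij.1 (by rw [hφanti, hp, ← mul_assoc, mul_rankOne, hφw₀])
    have hpdeg : p v₀ ∈ vgr g₀ := by
      have := (hφgraded 0 p).2 (fun g' u hu => by
        rw [hp, Module.End.mul_apply, rankOne_apply, zero_add]
        have := hVsmul k _ _ (hf' g' _ (hφedeg g' u hu)) w₀ hw₀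
        rwa [add_sub_cancel] at this) g₀ v₀ hv₀
      rwa [zero_add] at this
    have hd : f (p v₀) ∈ gr 0 := by simpa using hf g₀ _ hpdeg
    have hpv : p v₀ = MulOpposite.op (f (p v₀)) • v₀ := by
      conv_lhs => rw [← hep, Module.End.mul_apply, he, rankOne_apply]
    have hdd : f (p v₀) * f (p v₀) = f (p v₀) := by
      have h1 : f (p (p v₀)) = f (p v₀) := by rw [← Module.End.mul_apply, hpp]
      conv_lhs at h1 => rw [hpv, map_smul, map_smul, op_smul_eq_mul]
      exact h1
    have hpdecomp : p = rankOne F f (p v₀) := by rw [← mul_rankOne, ← he, hpe]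
    have hd0 : f (p v₀) ≠ 0 := by
      intro h0
      have hp0 : φ p w₀ = w₀ := by
        rw [hp, Module.End.mul_apply, hφw₀, rankOne_apply, hf'1, MulOpposite.op_one, one_smul]
      rw [hpdecomp, hpv, h0, MulOpposite.op_zero, zero_smul, map_zero, map_zero,
        LinearMap.zero_apply] at hp0
      exact hw₀0 hp0.symm
    have hd1 : f (p v₀) = 1 := (hDdiv 0 _ hd hd0).mul_left_cancel (by rw [hdd, mul_one])
    rw [← hp, hpdecomp, hpv, hd1, MulOpposite.op_one, one_smul]
  -- `φ (r_v) w` lies in the image `w₀ D` of `φ e`; `B v w` is its coordinate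
  have hB : ∀ v w, φ (rankOne F f v) w = MulOpposite.op (f' (φ (rankOne F f v) w)) • w₀ := by
    intro v w
    have h1 : φ e * φ (rankOne F f v) = φ (rankOne F f v) := by rw [← hφanti, hre]
    have h2 : rankOne F f' w₀ * φ (rankOne F f v) = φ (rankOne F f v) := by
      rw [← h1, ← mul_assoc, hq]
    conv_lhs => rw [← h2, Module.End.mul_apply, rankOne_apply]
  have hf'smul : ∀ (c : F) u, f' (c • u) = c • f' u := by
    intro c u
    have : c • u = (c • (1 : Dᵐᵒᵖ)) • u := by rw [smul_assoc, one_smul]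
    rw [this, map_smul, smul_assoc, one_smul]
  obtain ⟨B, hBdef⟩ : ∃ B : V →ₗ[F] V →ₗ[F] D, ∀ v w, B v w = f' (φ (rankOne F f v) w) :=
    ⟨LinearMap.mk₂ F (fun v w => f' (φ (rankOne F f v) w))
      (fun v v' w => by simp only [map_add, LinearMap.add_apply])
      (fun c v w => by simp only [map_smul, LinearMap.smul_apply, hf'smul])
      (fun v w w' => by simp only [map_add])
      (fun c v w => by
        rw [← hf'smul, LinearMap.map_smul_of_tower]), fun v w => rfl⟩
  have hBeq : ∀ v w, φ (rankOne F f v) w = MulOpposite.op (B v w) • w₀ := fun v w => by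
    rw [hBdef]; exact hB v w
  have hBadj : ∀ (r : Module.End Dᵐᵒᵖ V) (v w : V), B (r v) w = B v (φ r w) := by
    intro r v w
    rw [hBdef, hBdef, ← mul_rankOne, hφanti, Module.End.mul_apply]
  have hBright : ∀ (d : D) (v w : V), B v (MulOpposite.op d • w) = B v w * d := by
    intro d v w
    rw [hBdef, hBdef, map_smul, map_smul, op_smul_eq_mul]
  have hBdeg : ∀ g₁ g₂ : G, ∀ v ∈ vgr g₁, ∀ w ∈ vgr g₂, B v w ∈ gr (g₁ + g₂ + (-g₀ - k)) := by
    intro g₁ g₂ v hv w hw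
    have h1 := (hφgraded (g₁ - g₀) (rankOne F f v)).1 (hrdeg g₁ v hv) g₂ w hw
    have h2 := hf' _ _ h1
    rw [hBdef, show g₁ + g₂ + (-g₀ - k) = g₁ - g₀ + g₂ - k by abel]
    exact h2
  let τ : D →ₗ[F] D :=
    { toFun := fun d => B (MulOpposite.op d • v₀) w₀
      map_add' := fun x y => by
        rw [MulOpposite.op_add, add_smul, map_add, LinearMap.add_apply]
      map_smul' := fun c x => by
        rw [MulOpposite.op_smul, smul_assoc, map_smul, LinearMap.smul_apply, RingHom.id_apply] }
  have hτdef : ∀ d, τ d = B (MulOpposite.op d • v₀) w₀ := fun d => rfl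
  have hBleft : ∀ (d : D) (v w : V), B (MulOpposite.op d • v) w = τ d * B v w := by
    intro d v w
    -- `v d = r_v (v₀ d)`
    have h1 : MulOpposite.op d • v = rankOne F f v (MulOpposite.op d • v₀) := by
      rw [map_smul, hrv₀]
    rw [h1, hBadj, hBeq, hBright, hτdef]
  have hτmul : ∀ x y : D, τ (x * y) = τ y * τ x := by
    intro x y
    rw [hτdef (x * y), MulOpposite.op_mul, mul_smul, hBleft, hτdef x]
  have hτ1 : τ 1 = 1 := by
    rw [hτdef, MulOpposite.op_one, one_smul, hBdef, ← he, hφw₀, hf'1]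
  have hτg : ∀ h : G, ∀ x ∈ gr h, τ x ∈ gr h := by
    intro h x hx
    have := hBdeg _ _ _ (hVsmul g₀ h x hx v₀ hv₀) w₀ hw₀
    rwa [show g₀ + h + k + (-g₀ - k) = h by abel] at this
  refine ⟨τ, -g₀ - k, B, hτmul, graded_anti_involutive hDinternal hDmul hDdiv hDcentral τ hτmul
    hτ1 hτg, hτg, hBdeg, hBleft, hBright, ?_, ?_, hBadj⟩
  · intro v hv
    have h1 : φ (rankOne F f v) = 0 := LinearMap.ext fun w => by
      rw [hBeq, hv, MulOpposite.op_zero, zero_smul, LinearMap.zero_apply]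
    rw [← hrv₀ v, hφ0 _ h1, LinearMap.zero_apply]
  · intro w hw
    by_contra hne
    obtain ⟨j, hj⟩ := hcomp w hne
    obtain ⟨P, hP⟩ := exists_gradingProj hDinternal
    -- the right radical is a graded subspace, so it contains the component `Q j w`
    have hproj : ∀ a, ∀ v ∈ vgr a, ∀ u, B v (Q j u) = P (a + j + (-g₀ - k)) (B v u) := by
      intro a v hv u
      induction u using graded_induction hVinternal with
      | hom b u hu =>
        by_cases hb : b = j
        · subst hb
          rw [hQ.same b u hu, hP.same _ _ (hBdeg a b v hv u hu)]
        · rw [hQ.ne j b hb u hu, map_zero,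
            hP.ne _ (a + b + (-g₀ - k)) (by simpa using hb) _ (hBdeg a b v hv u hu)]
      | add_mem x y hx hy => rw [map_add, map_add, map_add, map_add, hx, hy]
    have hrad : ∀ v, B v (Q j w) = 0 := by
      intro v
      induction v using graded_induction hVinternal with
      | hom a v hv => rw [hproj a v hv, hw, map_zero]
      | add_mem x y hx hy => rw [map_add, LinearMap.add_apply, hx, hy, add_zero]
    -- an operator taking `Q j w` to `w₀` now contradicts `B v₀ w₀ = 1`
    obtain ⟨f'', hf''1, -⟩ := hdual j (Q j w) (hQ.mem j w) hj
    obtain ⟨r, hr⟩ := hφbij.2 (rankOne F f'' w₀)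
    have h1 : B v₀ w₀ = 0 := by
      rw [← hrad (r v₀), hBadj, hr, rankOne_apply, hf''1, MulOpposite.op_one, one_smul]
    rw [hτdef, MulOpposite.op_one, one_smul, h1] at hτ1
    exact zero_ne_one hτ1
end

section
/- Let G be an abelian group, D a finite-dimensional central G-graded division algebra over F, V a finite-dimensional G-graded right D-module, and φ a G-graded antiautomorphism of R = End_D(V) such that φ² acts as a nonzero scalar multiple of the identity on each homogeneous component R_g. Then every τ-sesquilinear nondegenerate homogeneous form B: V × V → D satisfying B(rv, w) = B(v, φ(r)w) for all r ∈ R, v,w ∈ V is balanced: for all homogeneous v,w ∈ V, B(v,w) = 0 if and only if B(w,v) = 0. -/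
/-!
Fix a nonzero homogeneous `v` and consider the rank-one operator `r x = v · B(v, x)`, which is
homogeneous, so `φ (φ r) = α • r` for some scalar `α`. Since nonzero homogeneous elements of `D`
are invertible, nondegeneracy gives `y` with `B(v, y) = 1`. Put `z = φ(r) y`. Taking adjoints once,
`B(x, z) = B(r x, y) = τ(B(v, x))` for all `x`; taking adjoints twice,
`B(z, x) = B(y, φ(φ r) x) = α B(y, v) B(v, x)`, so `z = v · d` with `d = τ(α B(y, v))` by
nondegeneracy. Hence `τ(B(v, x)) = B(x, v) d` for all `x`, and `B(x, v) = 0` forces `B(v, x) = 0`.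
Exchanging the two vectors gives the other implication.
-/

/-- With `D`, `V`, `R = End_D(V)` as before, if the `G`-graded
antiautomorphism `φ` of `R` satisfies that `φ²` acts as a nonzero scalar on each homogeneous
component of `R`, then every `τ`-sesquilinear nondegenerate homogeneous form `B` whose adjoint
map is `φ` is balanced: for homogeneous `v, w`, `B(v,w) = 0` iff `B(w,v) = 0`.

Right `D`-modules are modeled as left `Dᵐᵒᵖ`-modules; `v·d` is `MulOpposite.op d • v`. -/
theorem stmt_11 (F : Type) [Field F] [IsAlgClosed F] [CharZero F]
    (G : Type) [AddCommGroup G] [DecidableEq G]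
    (D : Type) [Ring D] [Nontrivial D] [Algebra F D] [FiniteDimensional F D]
    (gr : G → Submodule F D)
    (hDinternal : DirectSum.IsInternal gr)
    (hDmul : ∀ g h : G, ∀ a ∈ gr g, ∀ b ∈ gr h, a * b ∈ gr (g + h))
    (hDdiv : ∀ g : G, ∀ a ∈ gr g, a ≠ 0 → IsUnit a)
    (hDcentral : Subalgebra.center F D = ⊥)
    (V : Type) [AddCommGroup V] [Nontrivial V] [Module F V] [FiniteDimensional F V]
    [Module Dᵐᵒᵖ V] [IsScalarTower F Dᵐᵒᵖ V] [SMulCommClass Dᵐᵒᵖ F V]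
    [Module.Free Dᵐᵒᵖ V]
    (vgr : G → Submodule F V)
    (hVinternal : DirectSum.IsInternal vgr)
    (hVsmul : ∀ (g h : G) (d : D), d ∈ gr h → ∀ v ∈ vgr g,
      MulOpposite.op d • v ∈ vgr (g + h))
    (φ : Module.End Dᵐᵒᵖ V →ₗ[F] Module.End Dᵐᵒᵖ V)
    (hφbij : Function.Bijective φ)
    (hφanti : ∀ r s : Module.End Dᵐᵒᵖ V, φ (r * s) = φ s * φ r)
    (hφgraded : ∀ (g : G) (r : Module.End Dᵐᵒᵖ V),
      (∀ g' : G, ∀ v ∈ vgr g', r v ∈ vgr (g + g')) ↔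
      (∀ g' : G, ∀ v ∈ vgr g', φ r v ∈ vgr (g + g')))
    -- φ² acts as a nonzero scalar on each homogeneous component of R
    (hφsq : ∀ g : G, ∃ α : F, α ≠ 0 ∧ ∀ r : Module.End Dᵐᵒᵖ V,
      (∀ g' : G, ∀ v ∈ vgr g', r v ∈ vgr (g + g')) → φ (φ r) = α • r)
    -- a τ-sesquilinear nondegenerate homogeneous form of degree g with adjoint map φ
    (τ : D →ₗ[F] D) (g : G) (B : V →ₗ[F] V →ₗ[F] D)
    (hτanti : ∀ x y : D, τ (x * y) = τ y * τ x)
    (hτinv : ∀ x : D, τ (τ x) = x)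
    (hτgraded : ∀ h : G, ∀ x ∈ gr h, τ x ∈ gr h)
    (hBhom : ∀ g₁ g₂ : G, ∀ v ∈ vgr g₁, ∀ w ∈ vgr g₂, B v w ∈ gr (g₁ + g₂ + g))
    (hBsesq₁ : ∀ (d : D) (v w : V), B (MulOpposite.op d • v) w = τ d * B v w)
    (hBsesq₂ : ∀ (d : D) (v w : V), B v (MulOpposite.op d • w) = B v w * d)
    (hBnd₁ : ∀ v : V, (∀ w : V, B v w = 0) → v = 0)
    (hBnd₂ : ∀ w : V, (∀ v : V, B v w = 0) → w = 0)
    (hBadj : ∀ (r : Module.End Dᵐᵒᵖ V) (v w : V), B (r v) w = B v (φ r w)) :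
    -- B is balanced
    ∀ (g₁ g₂ : G), ∀ v ∈ vgr g₁, ∀ w ∈ vgr g₂, (B v w = 0 ↔ B w v = 0) := by
  -- The reflexivity identity `τ (B v x) = B x v * d`, in the form of the implication it yields.
  have key : ∀ (g₁ : G) (v : V), v ∈ vgr g₁ → ∀ w : V, B w v = 0 → B v w = 0 := by
    intro g₁ v hv w hw
    by_cases hv0 : v = 0
    · simp [hv0]
    obtain ⟨y, hy⟩ : ∃ y : V, B v y = 1 := by
      obtain ⟨k, y₀, hy₀, hne⟩ : ∃ k : G, ∃ y ∈ vgr k, B v y ≠ 0 := by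
        by_contra! hcon
        apply hv0
        apply hBnd₁
        intro x
        have hx : x ∈ ⨆ k, vgr k := by
          rw [hVinternal.submodule_iSup_eq_top]; trivial
        have hle : (⨆ k, vgr k) ≤ LinearMap.ker (B v) :=
          iSup_le fun k y hyk => LinearMap.mem_ker.2 (hcon k y hyk)
        exact LinearMap.mem_ker.1 (hle hx)
      obtain ⟨c, hc⟩ := (hDdiv _ _ (hBhom g₁ k v hv y₀ hy₀) hne).exists_right_inv
      exact ⟨MulOpposite.op c • y₀, by rw [hBsesq₂, hc]⟩
    let r : Module.End Dᵐᵒᵖ V :=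
      { toFun := fun x => MulOpposite.op (B v x) • v
        map_add' := fun x x' => by simp [add_smul]
        map_smul' := fun d x => by
          have h := hBsesq₂ d.unop v x
          rw [MulOpposite.op_unop] at h
          simp [h, mul_smul] }
    have hr : ∀ x, r x = MulOpposite.op (B v x) • v := fun _ => rfl
    obtain ⟨α, -, hα⟩ := hφsq (g₁ + g₁ + g)
    have hsq : φ (φ r) = α • r := by
      apply hα
      intro g' x hx
      have h := hVsmul g₁ _ _ (hBhom g₁ g' v hv x hx) v hv
      rw [hr]
      convert h using 2
      abel
    have h1 : ∀ x, B x (φ r y) = τ (B v x) := fun x => by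
      rw [← hBadj, hr, hBsesq₁, hy, mul_one]
    have h2 : ∀ x, B (φ r y) x = α • (B y v * B v x) := fun x => by
      rw [hBadj, hsq, LinearMap.smul_apply, map_smul, hr, hBsesq₂]
    have hz : φ r y = MulOpposite.op (τ (α • B y v)) • v := by
      rw [← sub_eq_zero]
      apply hBnd₁
      intro x
      rw [map_sub, LinearMap.sub_apply, h2, hBsesq₁, hτinv, smul_mul_assoc, sub_self]
    have h3 := h1 w
    rw [hz, hBsesq₂, hw, zero_mul] at h3
    rw [← hτinv (B v w), ← h3, map_zero]
  exact fun g₁ g₂ v hv w hw => ⟨key g₂ w hw v, key g₁ v hv w⟩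
end

section
/- Let G be an abelian group, D a finite-dimensional central G-graded division algebra over F, V a finite-dimensional G-graded right D-module, and φ a G-graded antiautomorphism of R = End_D(V). Suppose τ and τ' are graded involutions of D and B, B' are, respectively, a τ-sesquilinear and a τ'-sesquilinear nondegenerate homogeneous form on V, of degrees g and g', both satisfying B(rv,w) = B(v,φ(r)w) and B'(rv,w) = B'(v,φ(r)w) for all r ∈ R, v,w ∈ V. Then there exists a homogeneous element d ∈ D_{g−g'} such that τ'(x) = d·τ(x)·d^{−1} for all x ∈ D and B'(v,w) = d·B(v,w) for all v,w ∈ V. -/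
/-!
The algebra `D` has identity component `F` (finite-dimensional over an algebraically closed field),
hence one-dimensional nonzero components, so a graded involution acts on each component by a
sign. Comparing `τ (x * d)` with `τ d * τ x` shows that homogeneous elements commute up to sign,
so `d * d` is central, i.e. a scalar: the support of `D` has exponent two
(`add_self_eq_zero_of_mem`). This is what reconciles the degree `g' - g` that `B' = d B` forces on
`d` with the degree `g - g'` in the statement.

For the existence of `d`, pick homogeneous `p`, `e` in `V` with `B(p, e) = 1`
(nondegeneracy and graded division). For `u` in `V`, the rank-one endomorphism `v ↦ u B(p, v)` is
`φ q` for some `q`, so `B(q v, w) = B(v, u) B(p, w)` and `B'(q v, e) = B'(v, u)`. By nondegeneracy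
`q v` depends only on `B(v, u)`, in fact `q v = p₀ τ(B(v, u))` with `p₀ = q₀ p`, where `q₀` is
the `q` attached to `u = e`; this yields
`B'(v, u) = τ' (τ (B(v, u))) δ` with `δ = B'(p, e)`. Replacing `u` by `u x` gives
`δ x = τ' (τ x) δ`, hence `B' = δ B`.
-/

namespace GradedDivision

variable {F G D : Type} [Field F] [AddCommGroup G] [DecidableEq G] [Ring D] [Algebra F D]
  {gr : G → Submodule F D}

/-- A property closed under addition and true of homogeneous elements holds everywhere. -/
theorem hom_induction {M : Type} [AddCommGroup M] [Module F M] {vgr : G → Submodule F M}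
    (h : DirectSum.IsInternal vgr) {P : M → Prop} (hom : ∀ k, ∀ v ∈ vgr k, P v)
    (add : ∀ v w, P v → P w → P (v + w)) (v : M) : P v := by
  have hv : v ∈ ⨆ k, vgr k := by rw [h.submodule_iSup_eq_top]; trivial
  exact Submodule.iSup_induction vgr (motive := P) hv hom (hom 0 0 (zero_mem _)) add

/-- The projections onto the homogeneous components, with their values on homogeneous elements and
their compatibility with left multiplication by homogeneous elements. -/
theorem exists_proj (hint : DirectSum.IsInternal gr)
    (hmul : ∀ g h : G, ∀ a ∈ gr g, ∀ b ∈ gr h, a * b ∈ gr (g + h)) :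
    ∃ P : G → D →+ D, (∀ k x, P k x ∈ gr k) ∧ (∀ k, ∀ x ∈ gr k, P k x = x) ∧
      (∀ k h, h ≠ k → ∀ x ∈ gr h, P k x = 0) ∧
      (∀ h k, ∀ x ∈ gr h, ∀ y, P (h + k) (x * y) = x * P k y) := by
  let _ := hint.chooseDecomposition
  let P : G → D →+ D := fun k =>
    { toFun := fun x => (DirectSum.decompose gr x k : D)
      map_zero' := by simp
      map_add' := by simp }
  have hP1 : ∀ k, ∀ x ∈ gr k, P k x = x := fun k x hx => DirectSum.decompose_of_mem_same gr hx
  have hP2 : ∀ k h, h ≠ k → ∀ x ∈ gr h, P k x = 0 := fun k h hk x hx =>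
    DirectSum.decompose_of_mem_ne gr hx hk
  refine ⟨P, fun k x => (DirectSum.decompose gr x k).2, hP1, hP2, ?_⟩
  intro h k x hx y
  refine hom_induction hint (P := fun y => P (h + k) (x * y) = x * P k y) ?_ ?_ y
  · intro l y hy
    by_cases hl : l = k
    · subst hl
      rw [hP1 _ _ (hmul _ _ _ hx _ hy), hP1 _ _ hy]
    · rw [hP2 k l hl y hy, hP2 (h + k) (h + l) (by simpa using hl) _ (hmul _ _ _ hx _ hy), mul_zero]
  · intro a b ha hb
    rw [mul_add, map_add, map_add, ha, hb, mul_add]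

theorem one_mem (hint : DirectSum.IsInternal gr)
    (hmul : ∀ g h : G, ∀ a ∈ gr g, ∀ b ∈ gr h, a * b ∈ gr (g + h)) : (1 : D) ∈ gr 0 := by
  obtain ⟨P, hP0, hP1, -, hP3⟩ := exists_proj hint hmul
  -- The degree-zero component of `1` is a right identity.
  have key : ∀ x : D, x * P 0 1 = x := by
    refine hom_induction hint ?_ ?_
    · intro k x hx
      rw [← hP3 k 0 x hx 1, add_zero, mul_one, hP1 k x hx]
    · intro a b ha hb
      rw [add_mul, ha, hb]
  have := key 1
  rw [one_mul] at this
  rw [← this]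
  exact hP0 0 1

theorem exists_inv (hint : DirectSum.IsInternal gr)
    (hmul : ∀ g h : G, ∀ a ∈ gr g, ∀ b ∈ gr h, a * b ∈ gr (g + h))
    (hdiv : ∀ g : G, ∀ a ∈ gr g, a ≠ 0 → IsUnit a) {t : G} {a : D} (ha : a ∈ gr t) (h0 : a ≠ 0) :
    ∃ c ∈ gr (-t), a * c = 1 ∧ c * a = 1 := by
  obtain ⟨P, hP0, hP1, -, hP3⟩ := exists_proj hint hmul
  obtain ⟨u, rfl⟩ := hdiv t a ha h0
  have h1 : (u : D) * P (-t) (↑u⁻¹ : D) = 1 := by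
    rw [← hP3 t (-t) _ ha, add_neg_cancel, Units.mul_inv, hP1 0 1 (one_mem hint hmul)]
  have h2 : P (-t) (↑u⁻¹ : D) = (↑u⁻¹ : D) := by
    rw [← Units.inv_mul_cancel_left u (P (-t) (↑u⁻¹ : D)), h1, mul_one]
  exact ⟨(↑u⁻¹ : D), h2 ▸ hP0 _ _, by simp, by simp⟩

theorem mem_zero_scalar [IsAlgClosed F] [FiniteDimensional F D] [Nontrivial D]
    (hint : DirectSum.IsInternal gr)
    (hmul : ∀ g h : G, ∀ a ∈ gr g, ∀ b ∈ gr h, a * b ∈ gr (g + h))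
    (hdiv : ∀ g : G, ∀ a ∈ gr g, a ≠ 0 → IsUnit a) {a : D} (ha : a ∈ gr 0) :
    ∃ l : F, a = algebraMap F D l := by
  obtain ⟨l, hl⟩ := spectrum.nonempty_of_isAlgClosed_of_finiteDimensional F a
  refine ⟨l, ?_⟩
  by_contra hne
  refine hl (hdiv 0 _ ?_ (sub_ne_zero.mpr (Ne.symm hne)))
  rw [Algebra.algebraMap_eq_smul_one]
  exact sub_mem (Submodule.smul_mem _ _ (one_mem hint hmul)) ha

/-- A graded involution acts on each homogeneous element as multiplication by a sign, because the
homogeneous components are at most one-dimensional. -/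
theorem involution_sign [IsAlgClosed F] [FiniteDimensional F D] [Nontrivial D]
    (hint : DirectSum.IsInternal gr)
    (hmul : ∀ g h : G, ∀ a ∈ gr g, ∀ b ∈ gr h, a * b ∈ gr (g + h))
    (hdiv : ∀ g : G, ∀ a ∈ gr g, a ≠ 0 → IsUnit a)
    (τ : D →ₗ[F] D) (hτinv : ∀ x : D, τ (τ x) = x) (hτgraded : ∀ h : G, ∀ x ∈ gr h, τ x ∈ gr h)
    {t : G} {a : D} (ha : a ∈ gr t) : ∃ l : F, l * l = 1 ∧ τ a = l • a := by
  by_cases h0 : a = 0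
  · exact ⟨1, by simp, by simp [h0]⟩
  obtain ⟨c, hc, hac, -⟩ := exists_inv hint hmul hdiv ha h0
  have hca := hmul _ _ _ hc _ (hτgraded _ _ ha)
  rw [neg_add_cancel] at hca
  obtain ⟨l, hl⟩ := mem_zero_scalar hint hmul hdiv hca
  have hτ : τ a = l • a := by
    rw [← one_mul (τ a), ← hac, mul_assoc, hl, Algebra.algebraMap_eq_smul_one, mul_smul_comm,
      mul_one]
  refine ⟨l, ?_, hτ⟩
  have h2 := hτinv a
  rw [hτ, map_smul, hτ, smul_smul] at h2
  have h3 : (l * l - 1) • a = 0 := by rw [sub_smul, h2, one_smul, sub_self]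
  exact sub_eq_zero.mp ((smul_eq_zero.mp h3).resolve_right h0)

/-- The support of a central graded division algebra with graded involution has exponent two. -/
theorem add_self_eq_zero_of_mem [IsAlgClosed F] [FiniteDimensional F D] [Nontrivial D]
    (hint : DirectSum.IsInternal gr)
    (hmul : ∀ g h : G, ∀ a ∈ gr g, ∀ b ∈ gr h, a * b ∈ gr (g + h))
    (hdiv : ∀ g : G, ∀ a ∈ gr g, a ≠ 0 → IsUnit a)
    (hcentral : Subalgebra.center F D = ⊥)
    (τ : D →ₗ[F] D) (hτanti : ∀ x y : D, τ (x * y) = τ y * τ x)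
    (hτinv : ∀ x : D, τ (τ x) = x) (hτgraded : ∀ h : G, ∀ x ∈ gr h, τ x ∈ gr h)
    {t : G} {d : D} (hd : d ∈ gr t) (h0 : d ≠ 0) : t + t = 0 := by
  have hcomm : ∀ x : D, d * d * x = x * (d * d) := by
    refine hom_induction hint ?_ ?_
    · intro h x hx
      obtain ⟨l, hl, hld⟩ := involution_sign hint hmul hdiv τ hτinv hτgraded hd
      obtain ⟨m, hm, hmx⟩ := involution_sign hint hmul hdiv τ hτinv hτgraded hx
      obtain ⟨n, hn, hnx⟩ := involution_sign hint hmul hdiv τ hτinv hτgraded (hmul _ _ _ hx _ hd)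
      have h1 := hτanti x d
      rw [hld, hmx, hnx, smul_mul_smul_comm] at h1
      have h2 : d * x = (l * m * n) • (x * d) := by
        rw [mul_smul, h1, smul_smul, show l * m * (l * m) = (l * l) * (m * m) by ring, hl, hm]
        simp
      rw [mul_assoc, h2, mul_smul_comm, ← mul_assoc, h2, smul_mul_assoc, smul_smul,
        show l * m * n * (l * m * n) = (l * l) * (m * m) * (n * n) by ring, hl, hm, hn]
      simp [mul_assoc]
    · intro a b ha hb
      rw [mul_add, add_mul, ha, hb]
  have hmem : d * d ∈ Subalgebra.center F D := by
    rw [Subalgebra.mem_center_iff]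
    exact fun x => (hcomm x).symm
  rw [hcentral, Algebra.mem_bot] at hmem
  obtain ⟨l, hl⟩ := hmem
  have hz : d * d ∈ gr 0 := by
    rw [← hl, Algebra.algebraMap_eq_smul_one]
    exact Submodule.smul_mem _ _ (one_mem hint hmul)
  have hne : d * d ≠ 0 := ((hdiv t d hd h0).mul (hdiv t d hd h0)).ne_zero
  by_contra hne'
  obtain ⟨P, -, hP1, hP2, -⟩ := exists_proj hint hmul
  exact hne ((hP1 0 _ hz).symm.trans (hP2 0 (t + t) hne' _ (hmul _ _ _ hd _ hd)))

end GradedDivision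

open GradedDivision in
/-- With `D`, `V`, `R = End_D(V)` and a `G`-graded antiautomorphism `φ` as
before, if `B` (of degree `g`, `τ`-sesquilinear) and `B'` (of degree `g'`, `τ'`-sesquilinear)
are nondegenerate homogeneous forms which both have `φ` as adjoint map, then there is a
homogeneous element `d ∈ D_{g-g'}` with `τ'(x) = d·τ(x)·d⁻¹` for all `x ∈ D` and
`B'(v,w) = d·B(v,w)` for all `v, w ∈ V`.

Right `D`-modules are modeled as left `Dᵐᵒᵖ`-modules; `v·d` is `MulOpposite.op d • v`. -/
theorem stmt_12 (F : Type) [Field F] [IsAlgClosed F] [CharZero F]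
    (G : Type) [AddCommGroup G] [DecidableEq G]
    (D : Type) [Ring D] [Nontrivial D] [Algebra F D] [FiniteDimensional F D]
    (gr : G → Submodule F D)
    (hDinternal : DirectSum.IsInternal gr)
    (hDmul : ∀ g h : G, ∀ a ∈ gr g, ∀ b ∈ gr h, a * b ∈ gr (g + h))
    (hDdiv : ∀ g : G, ∀ a ∈ gr g, a ≠ 0 → IsUnit a)
    (hDcentral : Subalgebra.center F D = ⊥)
    (V : Type) [AddCommGroup V] [Nontrivial V] [Module F V] [FiniteDimensional F V]
    [Module Dᵐᵒᵖ V] [IsScalarTower F Dᵐᵒᵖ V] [SMulCommClass Dᵐᵒᵖ F V]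
    [Module.Free Dᵐᵒᵖ V]
    (vgr : G → Submodule F V)
    (hVinternal : DirectSum.IsInternal vgr)
    (hVsmul : ∀ (g h : G) (d : D), d ∈ gr h → ∀ v ∈ vgr g,
      MulOpposite.op d • v ∈ vgr (g + h))
    (φ : Module.End Dᵐᵒᵖ V →ₗ[F] Module.End Dᵐᵒᵖ V)
    (hφbij : Function.Bijective φ)
    (hφanti : ∀ r s : Module.End Dᵐᵒᵖ V, φ (r * s) = φ s * φ r)
    (hφgraded : ∀ (g : G) (r : Module.End Dᵐᵒᵖ V),
      (∀ g' : G, ∀ v ∈ vgr g', r v ∈ vgr (g + g')) ↔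
      (∀ g' : G, ∀ v ∈ vgr g', φ r v ∈ vgr (g + g')))
    -- the two forms
    (τ τ' : D →ₗ[F] D) (g g' : G) (B B' : V →ₗ[F] V →ₗ[F] D)
    (hτanti : ∀ x y : D, τ (x * y) = τ y * τ x)
    (hτinv : ∀ x : D, τ (τ x) = x)
    (hτgraded : ∀ h : G, ∀ x ∈ gr h, τ x ∈ gr h)
    (hτ'anti : ∀ x y : D, τ' (x * y) = τ' y * τ' x)
    (hτ'inv : ∀ x : D, τ' (τ' x) = x)
    (hτ'graded : ∀ h : G, ∀ x ∈ gr h, τ' x ∈ gr h)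
    (hBhom : ∀ g₁ g₂ : G, ∀ v ∈ vgr g₁, ∀ w ∈ vgr g₂, B v w ∈ gr (g₁ + g₂ + g))
    (hBsesq₁ : ∀ (d : D) (v w : V), B (MulOpposite.op d • v) w = τ d * B v w)
    (hBsesq₂ : ∀ (d : D) (v w : V), B v (MulOpposite.op d • w) = B v w * d)
    (hBnd₁ : ∀ v : V, (∀ w : V, B v w = 0) → v = 0)
    (hBnd₂ : ∀ w : V, (∀ v : V, B v w = 0) → w = 0)
    (hBadj : ∀ (r : Module.End Dᵐᵒᵖ V) (v w : V), B (r v) w = B v (φ r w))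
    (hB'hom : ∀ g₁ g₂ : G, ∀ v ∈ vgr g₁, ∀ w ∈ vgr g₂, B' v w ∈ gr (g₁ + g₂ + g'))
    (hB'sesq₁ : ∀ (d : D) (v w : V), B' (MulOpposite.op d • v) w = τ' d * B' v w)
    (hB'sesq₂ : ∀ (d : D) (v w : V), B' v (MulOpposite.op d • w) = B' v w * d)
    (hB'nd₁ : ∀ v : V, (∀ w : V, B' v w = 0) → v = 0)
    (hB'nd₂ : ∀ w : V, (∀ v : V, B' v w = 0) → w = 0)
    (hB'adj : ∀ (r : Module.End Dᵐᵒᵖ V) (v w : V), B' (r v) w = B' v (φ r w)) :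
    ∃ d dinv : D, d ∈ gr (g - g') ∧ d * dinv = 1 ∧ dinv * d = 1 ∧
      (∀ x : D, τ' x = d * τ x * dinv) ∧
      (∀ v w : V, B' v w = d * B v w) := by
  -- Homogeneous `e`, `w₀` with `B(w₀, e)` nonzero, hence invertible.
  obtain ⟨b, e, he, he0⟩ : ∃ b, ∃ e ∈ vgr b, e ≠ 0 := by
    by_contra! hcon
    obtain ⟨v, hv⟩ := exists_ne (0 : V)
    exact hv (hom_induction hVinternal (P := fun v => v = 0) hcon
      (fun v w hv hw => by rw [hv, hw, add_zero]) v)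
  obtain ⟨a, w₀, hw₀, hne⟩ : ∃ a, ∃ w ∈ vgr a, B w e ≠ 0 := by
    by_contra! hcon
    exact he0 (hBnd₂ e (hom_induction hVinternal (P := fun v => B v e = 0) hcon
      (fun v w hv hw => by rw [map_add, LinearMap.add_apply, hv, hw, add_zero])))
  obtain ⟨c, hc, -, hcB⟩ := exists_inv hDinternal hDmul hDdiv (hBhom _ _ _ hw₀ _ he) hne
  obtain ⟨p, hp, hpe⟩ : ∃ p ∈ vgr (-b - g), B p e = 1 := by
    refine ⟨MulOpposite.op (τ c) • w₀, ?_, by rw [hBsesq₁, hτinv, hcB]⟩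
    have := hVsmul _ _ _ (hτgraded _ _ hc) _ hw₀
    rwa [show a + -(a + b + g) = -b - g by abel] at this
  -- For each `u`, the preimage `q` under `φ` of the rank-one map `w ↦ u B(p, w)`.
  have hq : ∀ u : V, ∃ q : Module.End Dᵐᵒᵖ V,
      (∀ v w, B (q v) w = B v u * B p w) ∧ (∀ v w, B' (q v) w = B' v u * B p w) := by
    intro u
    let s : Module.End Dᵐᵒᵖ V :=
      { toFun := fun w => MulOpposite.op (B p w) • u
        map_add' := fun x y => by rw [map_add, MulOpposite.op_add, add_smul]
        map_smul' := fun x y => by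
          rw [← MulOpposite.op_unop x, hBsesq₂, MulOpposite.op_mul, mul_smul]
          rfl }
    obtain ⟨q, hqs⟩ := hφbij.2 s
    refine ⟨q, fun v w => ?_, fun v w => ?_⟩
    · rw [hBadj, hqs]
      exact hBsesq₂ _ _ _
    · rw [hB'adj, hqs]
      exact hB'sesq₂ _ _ _
  obtain ⟨q₀, hq₀, hq₀'⟩ := hq e
  have hform : ∀ v u, B' v u = τ' (τ (B v u)) * B' p e := by
    intro v u
    obtain ⟨q, hq1, hq2⟩ := hq u
    have h1 : q v = MulOpposite.op (τ (B v u)) • q₀ p := by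
      rw [← sub_eq_zero]
      refine hBnd₁ _ fun w => ?_
      rw [map_sub, LinearMap.sub_apply, hBsesq₁, hτinv, hq1, hq₀, hpe, one_mul, sub_self]
    have h2 := hq2 v e
    rw [hpe, mul_one, h1, hB'sesq₁, hq₀', hpe, mul_one] at h2
    exact h2.symm
  have hcommute : ∀ x, B' p e * x = τ' (τ x) * B' p e := by
    intro x
    have h := hform p (MulOpposite.op x • e)
    rwa [hB'sesq₂, hBsesq₂, hpe, one_mul] at h
  have hBB' : ∀ v w, B' v w = B' p e * B v w := fun v w => by rw [hcommute, ← hform]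
  have hδ : B' p e ∈ gr (g' - g) := by
    have := hB'hom _ _ _ hp _ he
    rwa [show -b - g + b + g' = g' - g by abel] at this
  have hδ0 : B' p e ≠ 0 := fun h =>
    he0 (hB'nd₂ e fun v => by rw [hBB', h, zero_mul])
  -- The degree `g' - g` has order at most two, so it equals `g - g'`.
  have hdeg : g' - g = g - g' := by
    have := add_self_eq_zero_of_mem hDinternal hDmul hDdiv hDcentral τ hτanti hτinv hτgraded hδ hδ0
    rw [eq_neg_of_add_eq_zero_left this, neg_sub]
  obtain ⟨di, -, h1, h2⟩ := exists_inv hDinternal hDmul hDdiv hδ hδ0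
  refine ⟨B' p e, di, hdeg ▸ hδ, h1, h2, fun x => ?_, hBB'⟩
  rw [hcommute, hτinv, mul_assoc, h1, mul_one]
end

section
/- Let g = ⊕_{γ∈G} g_γ be a grading of a finite-dimensional semisimple Lie algebra g over F by an abelian group G. Then there exists a Cartan subalgebra h of g that is homogeneous, i.e., h = ⊕_{γ∈G} (h ∩ g_γ), and such that h ∩ g_0 is a Cartan subalgebra of the Lie subalgebra g_0 (the identity component). -/
/-!
# Homogeneous Cartan subalgebras of graded semisimple Lie algebras

Let `h₀` be any Cartan subalgebra of `g₀`. The Killing form `κ` of `L` pairs `g_γ` with `g_δ`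
trivially unless `γ + δ = 0`, so it is nondegenerate on `g₀`, and by the Fitting decomposition also on
`h₀`. Hence `h₀` is abelian. Moreover the semisimple part (in `L`) of an element of `h₀` again has
degree `0` and commutes with `h₀`, so it lies in `h₀`; the nilpotent part is then in `h₀` and
`κ`-orthogonal to it, hence zero. So `h₀` is toral in `L` (`cartan_zero_toral`).

Choose a maximal set `T ⊇ h₀` of commuting homogeneous `ad`-semisimple elements and let `H` be its
centralizer. `H` is homogeneous; it is self-normalizing because `T` is toral; and `H ∩ g₀`
centralizes `h₀` and contains it, so it equals `h₀`. If `x ∈ H` is homogeneous, its semisimple part is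
homogeneous and centralizes `T`, so it lies in `T` by maximality and acts trivially on `H`; thus `ad x`
is nilpotent on `H`. Jacobson's generalization of Engel's theorem to Lie sets
(`isNilpotent_of_lieSet`) now shows that `H` is nilpotent (`centralizer_isCartan`).

The fact that the semisimple part of a homogeneous element is homogeneous of the same degree
(`semisimple_part_mem`) is obtained from uniqueness of the Jordan decomposition and the automorphisms
of `L` defined by characters `G → Fˣ`; these characters separate points because `Fˣ` is divisible
and contains enough roots of unity.
-/

open Module LieAlgebra

/-! ### Characters separate the points of an abelian group -/

theorem exists_char_ne_one (F : Type*) [Field F] [IsAlgClosed F] [CharZero F]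
    {G : Type*} [AddCommGroup G] {a : G} (ha : a ≠ 0) :
    ∃ χ : G →+ Additive Fˣ, χ a ≠ 0 := by
  -- A unit `ζ ≠ 1` killed by the order of `a` (which is `0` when `a` has infinite order).
  obtain ⟨ζ, hζ1, hζ⟩ : ∃ ζ : Fˣ, ζ ≠ 1 ∧ ζ ^ (addOrderOf a) = 1 := by
    by_cases h0 : addOrderOf a = 0
    · refine ⟨Units.mk0 2 two_ne_zero, fun h ↦ ?_, by simp [h0]⟩
      have := congrArg Units.val h
      norm_num at this
    · have : NeZero (addOrderOf a) := ⟨h0⟩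
      obtain ⟨ζ, hζ⟩ := HasEnoughRootsOfUnity.exists_primitiveRoot F (addOrderOf a)
      refine ⟨(hζ.isUnit h0).unit, fun h ↦ ?_, ?_⟩
      · have h1 := congrArg Units.val h
        simp only [IsUnit.unit_spec, Units.val_one] at h1
        subst h1
        have := hζ.dvd_of_pow_eq_one 1 (by simp)
        exact ha (AddMonoid.addOrderOf_eq_one_iff.mp (Nat.dvd_one.mp this))
      · ext; simpa using hζ.pow_eq_one
  -- `a ↦ ζ` is well defined on `ℤ ∙ a`, and extends to `G` because `Fˣ` is divisible.
  let g : ℤ →ₗ[ℤ] Additive Fˣ := LinearMap.toSpanSingleton ℤ _ (Additive.ofMul ζ)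
  let g' : (ℤ ∙ a) →ₗ[ℤ] Additive Fˣ :=
    (Submodule.liftQ _ g (by
      rw [Ideal.span, Submodule.span_le, Set.singleton_subset_iff]
      change ((addOrderOf a : ℤ)) • (Additive.ofMul ζ) = 0
      rw [natCast_zsmul, ← ofMul_pow, hζ, ofMul_one])).comp
      (CharacterModule.intSpanEquivQuotAddOrderOf a).toLinearMap
  have : DivisibleBy (Additive Fˣ) ℤ := by
    have : DivisibleBy (Additive Fˣ) ℕ := by
      refine divisibleByOfSMulRightSurj _ _ fun {n} hn u ↦ ?_
      obtain ⟨z, hz⟩ := IsAlgClosed.exists_pow_nat_eq (u.toMul : F) (Nat.pos_of_ne_zero hn)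
      have hz0 : z ≠ 0 := by
        rintro rfl
        rw [zero_pow hn] at hz
        exact u.toMul.ne_zero hz.symm
      refine ⟨Additive.ofMul (Units.mk0 z hz0), ?_⟩
      apply Additive.toMul.injective
      ext
      simpa using hz
    exact AddGroup.divisibleByIntOfDivisibleByNat _
  obtain ⟨h, hh⟩ := Module.Baer.extension_property (Module.Baer.of_divisible (Additive Fˣ))
    (Submodule.subtype (ℤ ∙ a)) (Submodule.injective_subtype _) g'
  refine ⟨h.toAddMonoidHom, ?_⟩
  have := LinearMap.congr_fun hh ⟨a, Submodule.mem_span_singleton_self a⟩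
  simp only [LinearMap.comp_apply, Submodule.subtype_apply] at this
  change h a ≠ 0
  rw [this]
  simp only [g', LinearMap.comp_apply, LinearEquiv.coe_coe, CharacterModule.intSpanEquivQuotAddOrderOf_apply_self]
  rw [Submodule.liftQ_apply]
  simpa [g] using hζ1

theorem exists_char_ne (F : Type*) [Field F] [IsAlgClosed F] [CharZero F]
    {G : Type*} [AddCommGroup G] {a b : G} (hab : a ≠ b) :
    ∃ χ : Multiplicative G →* Fˣ, χ (.ofAdd a) ≠ χ (.ofAdd b) := by
  obtain ⟨χ, hχ⟩ := exists_char_ne_one F (sub_ne_zero.mpr hab)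
  refine ⟨AddMonoidHom.toMultiplicativeLeft χ, fun h ↦ hχ ?_⟩
  rw [map_sub, sub_eq_zero]
  exact h

/-! ### Jordan decomposition in the adjoint representation -/

/-- If conjugation by `φ` scales `A` by `c` (in the sense `φ A = c A φ`), it scales the semisimple part
`S` of `A` in the same way: `φ` carries the generalized `μ`-eigenspace of `A` to the one for
`c⁻¹ μ`, and `S` acts on these as scalars. -/
theorem semisimple_part_twist {F V : Type*} [Field F] [IsAlgClosed F] [AddCommGroup V] [Module F V]
    [FiniteDimensional F V] {A S φ : End F V} {c : F} (hc : c ≠ 0)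
    (hφ : ∀ v, φ (A v) = c • A (φ v)) (hS : S.IsSemisimple) (hAS : Commute A S)
    (hN : IsNilpotent (A - S)) (v : V) : φ (S v) = c • S (φ v) := by
  have key : ∀ μ : F, ∀ v ∈ A.maxGenEigenspace μ, S v = μ • v := fun μ v hv ↦
    End.apply_eq_of_mem_of_comm_of_isFinitelySemisimple_of_isNil hv hAS
      hS.isFinitelySemisimple hN
  have hv : v ∈ ⨆ μ : F, A.maxGenEigenspace μ := by
    rw [End.iSup_maxGenEigenspace_eq_top]; trivial
  induction hv using Submodule.iSup_induction' with
  | mem μ v hv =>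
    have hmem : φ v ∈ A.maxGenEigenspace (c⁻¹ * μ) := by
      rw [End.mem_maxGenEigenspace] at hv ⊢
      obtain ⟨k, hk⟩ := hv
      refine ⟨k, ?_⟩
      have : ∀ (k : ℕ) (w : V), ((A - (c⁻¹ * μ) • 1) ^ k) (φ w) =
          (c⁻¹ ^ k) • φ (((A - μ • 1) ^ k) w) := by
        intro k
        induction k with
        | zero => simp
        | succ k ih =>
          intro w
          have h1 : (A - (c⁻¹ * μ) • 1) (φ w) = φ (c⁻¹ • (A - μ • 1) w) := by
            simp [hφ, smul_sub, hc, mul_smul]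
          rw [pow_succ, Module.End.mul_apply, h1, ih, map_smul, map_smul, smul_smul, pow_succ c⁻¹,
            pow_succ (A - μ • 1), Module.End.mul_apply]
      rw [this, hk, map_zero, smul_zero]
    rw [key _ _ hv, key _ _ hmem, map_smul, smul_smul, mul_inv_cancel_left₀ hc]
  | zero => simp
  | add x y _ _ hx hy => simp [hx, hy]

theorem eq_of_lie_eq (F : Type*) {L : Type*} [Field F] [LieRing L] [LieAlgebra F L]
    [Module.Finite F L] [LieAlgebra.IsKilling F L] {x y : L} (h : ∀ z : L, ⁅x, z⁆ = ⁅y, z⁆) : x = y := by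
  have : x - y ∈ LieAlgebra.center F L := by
    rw [LieModule.mem_maxTrivSubmodule]
    intro z
    rw [← lie_skew, sub_lie, h, sub_self, neg_zero]
  rw [LieAlgebra.center_eq_bot, LieSubmodule.mem_bot, sub_eq_zero] at this
  exact this

/-- Jordan decomposition inside `L`: the semisimple part of `ad x` acts on generalized eigenspaces of
`ad x` as scalars, so it is a derivation, hence inner. -/
theorem exists_jordan {F L : Type*} [Field F] [IsAlgClosed F] [CharZero F] [LieRing L]
    [LieAlgebra F L] [Module.Finite F L] [IsKilling F L] (x : L) : ∃ s : L, (ad F L s).IsSemisimple ∧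
    IsNilpotent (ad F L x - ad F L s) ∧ ad F L s ∈ Algebra.adjoin F {ad F L x} := by
  obtain ⟨n, hn, S, hS, hn', hS', hx⟩ := (ad F L x).exists_isNilpotent_isSemisimple
  have hc : Commute (ad F L x) S := Algebra.commute_of_mem_adjoin_self hS
  have key : ∀ μ : F, ∀ v ∈ (ad F L x).maxGenEigenspace μ, S v = μ • v := fun μ v hv ↦
    End.apply_eq_of_mem_of_comm_of_isFinitelySemisimple_of_isNil hv hc
      hS'.isFinitelySemisimple (by rwa [hx, add_sub_cancel_right])
  have top : ∀ v : L, v ∈ ⨆ μ : F, (ad F L x).maxGenEigenspace μ := fun v ↦ by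
    rw [End.iSup_maxGenEigenspace_eq_top]; trivial
  let D : LieDerivation F L L :=
    { toLinearMap := S
      leibniz' := fun a b ↦ by
        have ha := top a
        induction ha using Submodule.iSup_induction' with
        | mem μ a ha =>
          have hb := top b
          induction hb using Submodule.iSup_induction' with
          | mem ν b hb =>
            have := LieModule.lie_mem_maxGenEigenspace_toEnd (x := x) ha hb
            rw [key _ _ this, key _ _ ha, key _ _ hb, lie_smul, lie_smul, ← lie_skew a b]
            module
          | zero => simp
          | add p q _ _ hp hq => simp only [lie_add, map_add, hp, hq, add_lie]; abel
        | zero => simp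
        | add p q _ _ hp hq => simp only [lie_add, map_add, hp, hq, add_lie]; abel }
  obtain ⟨s, hs⟩ := LieDerivation.IsKilling.exists_eq_ad D
  have hsS : ad F L s = S := by
    ext y
    have := congrArg (fun D : LieDerivation F L L ↦ D y) hs
    simp only [LieDerivation.ad_apply_apply] at this
    exact this
  refine ⟨s, ?_, ?_, ?_⟩ <;> rw [hsS]
  · exact hS'
  · rwa [hx, add_sub_cancel_right]
  · exact hS

section Adjoint
variable {F L : Type*} [Field F] [LieRing L] [LieAlgebra F L]

theorem commute_ad_of_lie_eq_zero {x y : L} (h : ⁅x, y⁆ = 0) :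
    Commute (ad F L x) (ad F L y) := by
  refine LinearMap.ext fun z ↦ ?_
  simp only [Module.End.mul_apply, ad_apply]
  rw [leibniz_lie, h, zero_lie, zero_add]

/-- Whatever centralizes `x` centralizes the semisimple part of `x`. -/
theorem lie_eq_zero_of_mem_adjoin [Module.Finite F L] [IsKilling F L] {x s t : L}
    (hs : ad F L s ∈ Algebra.adjoin F {ad F L x}) (ht : ⁅t, x⁆ = 0) : ⁅t, s⁆ = 0 := by
  have h2 : Commute (ad F L t) (ad F L s) :=
    Algebra.commute_of_mem_adjoin_singleton_of_commute hs (commute_ad_of_lie_eq_zero ht)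
  refine eq_of_lie_eq F fun z ↦ ?_
  have := LinearMap.congr_fun h2 z
  simp only [Module.End.mul_apply, ad_apply] at this
  rw [lie_lie, this, sub_self, zero_lie]

end Adjoint

/-! ### Homogeneous components -/

section Components
variable {F L : Type*} [Field F] [AddCommGroup L] [Module F L] {G : Type*} [DecidableEq G]

/-- The projection of `L = ⨁ lgr δ` onto its component `lgr δ`, as an endomorphism of `L`. -/
noncomputable def gradedProj (lgr : G → Submodule F L) (hint : DirectSum.IsInternal lgr) (δ : G) : L →ₗ[F] L :=
  letI := hint.chooseDecomposition
  (lgr δ).subtype ∘ₗ DirectSum.component F G _ δ ∘ₗ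
    (DirectSum.decomposeLinearEquiv lgr).toLinearMap

variable {lgr : G → Submodule F L} (hint : DirectSum.IsInternal lgr)

theorem gradedProj_mem (δ : G) (v : L) : gradedProj lgr hint δ v ∈ lgr δ := by
  simp [gradedProj]

theorem gradedProj_of_mem {δ : G} {v : L} (hv : v ∈ lgr δ) : gradedProj lgr hint δ v = v := by
  let _ := hint.chooseDecomposition
  exact DirectSum.decompose_of_mem_same lgr hv

theorem gradedProj_of_mem_ne {δ ε : G} {v : L} (hv : v ∈ lgr ε) (h : ε ≠ δ) :
    gradedProj lgr hint δ v = 0 := by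
  let _ := hint.chooseDecomposition
  exact DirectSum.decompose_of_mem_ne lgr hv h

theorem mem_of_gradedProj_mem {N : Submodule F L} {v : L}
    (h : ∀ δ, gradedProj lgr hint δ v ∈ N) : v ∈ N := by
  let _ := hint.chooseDecomposition
  classical
  rw [← DirectSum.sum_support_decompose lgr v]
  exact Submodule.sum_mem _ fun δ _ ↦ h δ

include hint in
theorem grading_induction {p : L → Prop} (hm : ∀ δ, ∀ v ∈ lgr δ, p v) (h0 : p 0)
    (ha : ∀ v w, p v → p w → p (v + w)) (v : L) : p v := by
  have hv : v ∈ ⨆ δ, lgr δ := by rw [hint.submodule_iSup_eq_top]; trivial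
  exact Submodule.iSup_induction lgr (motive := p) hv hm h0 ha

end Components

section Grading
variable {F L : Type*} [Field F] [LieRing L] [LieAlgebra F L]
  {G : Type*} [AddCommGroup G] [DecidableEq G] {lgr : G → Submodule F L}
  (hint : DirectSum.IsInternal lgr)
  (hlie : ∀ g h : G, ∀ x ∈ lgr g, ∀ y ∈ lgr h, ⁅x, y⁆ ∈ lgr (g + h))

include hint in
/-- The linear map by which a character of `G` acts on `L`. -/
theorem exists_charAction (χ : Multiplicative G →* Fˣ) :
    ∃ φ : L →ₗ[F] L, ∀ δ, ∀ v ∈ lgr δ, φ v = (χ (.ofAdd δ) : F) • v := by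
  let _ := hint.chooseDecomposition
  refine ⟨DirectSum.toModule F G L (fun δ ↦ (χ (.ofAdd δ) : F) • (lgr δ).subtype) ∘ₗ
    (DirectSum.decomposeLinearEquiv lgr).toLinearMap, fun δ v hv ↦ ?_⟩
  simp only [LinearMap.comp_apply, LinearEquiv.coe_coe, DirectSum.decomposeLinearEquiv_apply,
    DirectSum.decompose_of_mem lgr hv]
  erw [DirectSum.toModule_lof]
  simp

include hint hlie in
/-- The semisimple part of a homogeneous element is homogeneous of the same degree. -/
theorem semisimple_part_mem [IsAlgClosed F] [CharZero F] [Module.Finite F L] [IsKilling F L]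
    {γ : G} {x s : L} (hx : x ∈ lgr γ)
    (hs : (ad F L s).IsSemisimple) (hn : IsNilpotent (ad F L x - ad F L s))
    (hc : Commute (ad F L x) (ad F L s)) : s ∈ lgr γ := by
  refine mem_of_gradedProj_mem hint fun δ ↦ ?_
  by_cases hδ : δ = γ
  · exact hδ ▸ gradedProj_mem hint δ s
  suffices gradedProj lgr hint δ s = 0 by rw [this]; exact zero_mem _
  obtain ⟨χ, hχ⟩ := exists_char_ne F hδ
  obtain ⟨φ, hφ⟩ := exists_charAction hint χ
  obtain ⟨ψ, hψ⟩ := exists_charAction hint χ⁻¹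
  have hφψ : ∀ v, φ (ψ v) = v := by
    refine grading_induction hint (fun δ v hv ↦ ?_) (by simp) (fun v w hv hw ↦ by simp [hv, hw])
    rw [hψ δ v hv, map_smul, hφ δ v hv, smul_smul]
    simp
  have hφlie : ∀ v w, φ ⁅v, w⁆ = ⁅φ v, φ w⁆ := by
    intro v w
    revert v
    refine grading_induction hint (fun δ v hv ↦ ?_) (by simp) (fun v w hv hw ↦ by simp [hv, hw])
    revert w
    refine grading_induction hint (fun ε w hw ↦ ?_) (by simp) (fun v w hv hw ↦ by simp [hv, hw])
    rw [hφ _ _ (hlie δ ε v hv w hw), hφ _ _ hv, hφ _ _ hw, ofAdd_add, map_mul, smul_lie, lie_smul,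
      smul_smul, Units.val_mul]
  -- `φ` scales `ad x` by `χ γ`, hence also its semisimple part.
  have htw := semisimple_part_twist (A := ad F L x) (S := ad F L s) (φ := φ)
    (χ (.ofAdd γ)).ne_zero (fun v ↦ by simp [hφlie, hφ γ x hx]) hs hc hn
  have hφs : φ s = (χ (.ofAdd γ) : F) • s := by
    refine eq_of_lie_eq F fun z ↦ ?_
    have := htw (ψ z)
    simpa [hφlie, hφψ] using this
  -- `φ` acts on the degree `δ` component of `s` both by `χ δ` and by `χ γ`.
  have hcomm : ∀ v, gradedProj lgr hint δ (φ v) = (χ (.ofAdd δ) : F) • gradedProj lgr hint δ v := by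
    refine grading_induction hint (fun ε v hv ↦ ?_) (by simp) (fun v w hv hw ↦ by simp [hv, hw])
    by_cases h : ε = δ
    · subst h; rw [hφ _ _ hv, map_smul]
    · rw [hφ _ _ hv, map_smul, gradedProj_of_mem_ne hint hv h, smul_zero, smul_zero]
  have h2 := hcomm s
  rw [hφs, map_smul, ← sub_eq_zero, ← sub_smul, smul_eq_zero] at h2
  refine h2.resolve_left fun h ↦ hχ ?_
  exact Units.ext (sub_eq_zero.mp h).symm

/-! ### Cartan subalgebras of the identity component are toral -/

include hint hlie in
theorem killing_nondeg_zero [Module.Finite F L] [IsKilling F L] {x : L} (hx : x ∈ lgr 0)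
    (h : ∀ y ∈ lgr 0, killingForm F L x y = 0) : x = 0 := by
  have : x ∈ LinearMap.ker (killingForm F L) := by
    rw [LinearMap.mem_ker]
    ext y
    revert y
    refine grading_induction hint (fun δ y hy ↦ ?_) (by simp) (fun v w hv hw ↦ by simp [hv, hw])
    by_cases hδ : δ = 0
    · subst hδ; exact h y hy
    · rw [killingForm_apply_apply]
      refine LinearMap.trace_eq_zero_of_mapsTo_ne hint (fun ε ↦ 0 + (δ + ε))
        (fun ε ↦ by simpa using hδ) fun ε v hv ↦ ?_
      exact hlie _ _ _ hx _ (hlie _ _ _ hy _ hv)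
  simpa using this
/-- If the Killing form of `L` is nondegenerate on `g0`, it is so on any Cartan subalgebra of `g0`. -/
theorem cartan_nondeg [Module.Finite F L] (g0 : LieSubalgebra F L)
    (hnd : ∀ x ∈ g0, (∀ y ∈ g0, killingForm F L x y = 0) → x = 0)
    (h0 : LieSubalgebra F g0) [h0.IsCartanSubalgebra] {x : g0} (hx : x ∈ h0)
    (h : ∀ y ∈ h0, killingForm F L x y = 0) : x = 0 := by
  ext
  refine hnd x x.2 fun y hy ↦ ?_
  -- Fitting decomposition `g0 = h0 ⊕ posFittingComp` under `h0`; the two summands are orthogonal.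
  have hcod := (LieModule.isCompl_genWeightSpace_zero_posFittingComp F h0 g0).codisjoint
  have hy' : (⟨y, hy⟩ : g0) ∈ rootSpace h0 0 ⊔ LieModule.posFittingComp F h0 g0 := by
    rw [codisjoint_iff.mp hcod]; trivial
  obtain ⟨a, ha, b, hb, hab⟩ := (LieSubmodule.mem_sup _ _ _).mp hy'
  have hx' : x ∈ rootSpace h0 (0 : h0 → F) := le_zeroRootSubalgebra F g0 h0 hx
  rw [rootSpace_zero_eq F g0 h0] at ha
  have hB := LieModule.eq_zero_of_mem_genWeightSpace_mem_posFitting F h0 g0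
    (B := LieModule.traceForm F g0 L)
    (fun u v w ↦ LieModule.traceForm_apply_lie_apply' F g0 L u v w) hx' hb
  have hab' : y = (a : L) + b := congrArg Subtype.val hab.symm
  rw [hab', map_add, h a ha, zero_add]
  exact hB

include hint hlie in
theorem cartan_zero_toral [IsAlgClosed F] [CharZero F] [Module.Finite F L] [IsKilling F L]
    (g0 : LieSubalgebra F L) (hg0 : (g0 : Submodule F L) = lgr 0)
    (h0 : LieSubalgebra F g0) [h0.IsCartanSubalgebra] :
    (∀ x ∈ h0, ∀ y ∈ h0, ⁅(x : L), (y : L)⁆ = 0) ∧ ∀ x ∈ h0, (ad F L (x : L)).IsSemisimple := by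
  have hmem : ∀ x, x ∈ g0 ↔ x ∈ lgr 0 := fun x ↦ by rw [← hg0]; rfl
  have hnd : ∀ x ∈ h0, (∀ y ∈ h0, killingForm F L (x : L) y = 0) → x = 0 := fun x hx h ↦
    cartan_nondeg g0 (fun x hx h ↦ killing_nondeg_zero hint hlie ((hmem x).mp hx)
      fun y hy ↦ h y ((hmem y).mpr hy)) h0 hx h
  have hab : IsLieAbelian h0 := by
    refine LieModule.isLieAbelian_of_ker_traceForm_eq_bot F h0 L ?_
    rw [eq_bot_iff]
    intro x hx
    rw [LinearMap.mem_ker] at hx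
    have : (x : g0) = 0 := hnd x x.2 fun y hy ↦ LinearMap.congr_fun hx ⟨y, hy⟩
    exact Subtype.ext this
  have hcomm : ∀ x ∈ h0, ∀ y ∈ h0, ⁅(x : L), (y : L)⁆ = 0 := fun x hx y hy ↦ by
    have := hab.trivial ⟨x, hx⟩ ⟨y, hy⟩
    exact congrArg (fun z : h0 ↦ ((z : g0) : L)) this
  refine ⟨hcomm, fun x hx ↦ ?_⟩
  obtain ⟨s, hs, hn, hadj⟩ := exists_jordan (F := F) (x : L)
  have hcs : Commute (ad F L (x : L)) (ad F L s) := Algebra.commute_of_mem_adjoin_self hadj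
  have hs0 : s ∈ g0 :=
    (hmem s).mpr (semisimple_part_mem hint hlie ((hmem _).mp x.2) hs hn hcs)
  have hsc : ∀ y ∈ h0, ⁅(y : L), s⁆ = 0 := fun y hy ↦
    lie_eq_zero_of_mem_adjoin hadj (hcomm y hy x hx)
  have hsh : (⟨s, hs0⟩ : g0) ∈ h0 := by
    rw [← LieSubalgebra.IsCartanSubalgebra.self_normalizing (H := h0),
      LieSubalgebra.mem_normalizer_iff']
    intro y hy
    have : ⁅y, (⟨s, hs0⟩ : g0)⁆ = 0 := Subtype.ext (hsc y hy)
    rw [this]; exact h0.zero_mem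
  -- The nilpotent part of `x` lies in `h0` and is orthogonal to `h0`, since `h0` is commutative.
  have hz : x - ⟨s, hs0⟩ = 0 := by
    refine hnd _ (h0.sub_mem hx hsh) fun y hy ↦ ?_
    rw [killingForm_apply_apply, ← isNilpotent_iff_eq_zero]
    apply LinearMap.isNilpotent_trace_of_isNilpotent
    have hc : Commute (ad F L ((x - ⟨s, hs0⟩ : g0) : L)) (ad F L (y : L)) := by
      exact commute_ad_of_lie_eq_zero (hcomm _ (h0.sub_mem hx hsh) y hy)
    refine hc.isNilpotent_mul_right ?_
    simpa using hn
  have : (x : L) = s := congrArg Subtype.val (sub_eq_zero.mp hz)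
  rw [this]; exact hs

/-! ### Engel's theorem for Lie sets -/

/-- Jacobson's form of Engel's theorem: it suffices that `ad x` is nilpotent for `x` in a spanning set
closed under brackets. -/
theorem isNilpotent_of_lieSet [Module.Finite F L] (S : Set L) (hS : ∀ x ∈ S, ∀ y ∈ S, ⁅x, y⁆ ∈ S)
    (hspan : Submodule.span F S = ⊤) (hnil : ∀ x ∈ S, IsNilpotent (ad F L x)) :
    LieRing.IsNilpotent L := by
  -- A maximal subalgebra `K` that is spanned by elements of `S` and acts nilpotently on `L`.
  let P : LieSubalgebra F L → Prop := fun K ↦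
    (K : Submodule F L) ≤ Submodule.span F (S ∩ K) ∧ LieModule.IsNilpotent K L
  have hbot : P ⊥ := ⟨by simp, (LieModule.isNilpotent_iff_forall (R := F)).mpr fun x ↦ by
    have : x = 0 := Subtype.ext ((LieSubalgebra.mem_bot _).mp x.2)
    rw [this, map_zero]; exact IsNilpotent.zero⟩
  obtain ⟨K, hK, hmax⟩ := (LieSubalgebra.wellFoundedGT_of_noetherian F L).wf.has_min {K | P K}
    ⟨⊥, hbot⟩
  obtain ⟨hKS, hKnil⟩ : P K := hK
  suffices hSK : S ⊆ K by
    have : K = ⊤ := by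
      rw [← LieSubalgebra.toSubmodule_inj, LieSubalgebra.top_toSubmodule, eq_top_iff, ← hspan]
      exact Submodule.span_le.mpr hSK
    subst this
    exact (LieModule.isNilpotent_of_top_iff (R := F)).mp hKnil
  by_contra hSK
  -- If no such `s` existed, any element of `S` outside `K` could be replaced by its bracket with some
  -- element of `S ∩ K`, again in `S` and outside `K`; so `S` would leave `K` arbitrarily deep in the
  -- lower central series of the nilpotent `K`-module `L`.
  obtain ⟨s, hsS, hsK, hsN⟩ : ∃ s ∈ S, s ∉ K ∧ s ∈ K.normalizer := by
    by_contra! hno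
    obtain ⟨m, hm⟩ := LieModule.IsNilpotent.nilpotent F K L
    have : ∀ n, ∃ s ∈ S, s ∉ K ∧ s ∈ LieModule.lowerCentralSeries F K L n := by
      intro n
      induction n with
      | zero =>
        obtain ⟨s, hs, hs'⟩ := Set.not_subset.mp hSK
        exact ⟨s, hs, hs', by simp⟩
      | succ n ih =>
        obtain ⟨s, hs, hs', hn⟩ := ih
        have h1 := hno s hs hs'
        rw [LieSubalgebra.mem_normalizer_iff] at h1
        obtain ⟨k, hk, hks⟩ : ∃ k ∈ S ∩ K, ⁅s, k⁆ ∉ K := by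
          by_contra! hall
          have hle : (K : Submodule F L) ≤ (K : Submodule F L).comap (ad F L s) :=
            hKS.trans (Submodule.span_le.mpr hall)
          exact h1 fun y hy ↦ hle hy
        rw [← lie_skew, neg_mem_iff] at hks
        refine ⟨⁅k, s⁆, hS k hk.1 s hs, hks, ?_⟩
        rw [LieModule.lowerCentralSeries_succ]
        exact LieSubmodule.lie_mem_lie (LieSubmodule.mem_top (⟨k, hk.2⟩ : K)) hn
    obtain ⟨s, -, hs, hs'⟩ := this m
    rw [hm, LieSubmodule.mem_bot] at hs'
    exact hs (hs' ▸ K.zero_mem)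
  -- Adjoining `s` to `K` contradicts maximality.
  let K' : LieSubalgebra F L :=
    { (F ∙ s) ⊔ (K : Submodule F L) with
      lie_mem' := fun {y z} => LieSubalgebra.lie_mem_sup_of_mem_normalizer hsN }
  have hsK' : s ∈ K' := Submodule.mem_sup_left (Submodule.subset_span (Set.mem_singleton _))
  have hKK' : K ≤ K' := (LieSubalgebra.toSubmodule_le_toSubmodule K K').mp le_sup_right
  have hK' : K' ≤ K.normalizer := by
    rw [← LieSubalgebra.toSubmodule_le_toSubmodule]
    exact sup_le ((Submodule.span_singleton_le_iff_mem _ _).mpr hsN) K.le_normalizer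
  refine hmax K' ⟨?_, ?_⟩ (lt_of_le_of_ne hKK' fun h ↦ hsK (h ▸ hsK'))
  · refine sup_le ((Submodule.span_singleton_le_iff_mem _ _).mpr
      (Submodule.subset_span ⟨hsS, hsK'⟩)) (hKS.trans (Submodule.span_mono ?_))
    exact Set.inter_subset_inter_right _ hKK'
  · obtain ⟨I, hI₁ : (I : LieSubalgebra F K') = LieSubalgebra.ofLe hKK'⟩ :=
      LieSubalgebra.exists_nested_lieIdeal_ofLe_normalizer hKK' hK'
    have hI₂ : F ∙ (⟨s, hsK'⟩ : K') ⊔ LieSubmodule.toSubmodule I = ⊤ := by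
      rw [← LieIdeal.toLieSubalgebra_toSubmodule F K' I, hI₁]
      apply Submodule.map_injective_of_injective (K' : Submodule F L).injective_subtype
      simp only [LieSubalgebra.coe_ofLe, Submodule.map_sup, Submodule.map_subtype_range_inclusion,
        Submodule.map_top, Submodule.range_subtype]
      rw [Submodule.map_subtype_span_singleton]
    refine LieSubmodule.isNilpotentOfIsNilpotentSpanSupEqTop hI₂ (hnil s hsS) ?_
    rw [LieModule.isNilpotent_iff_forall (R := F)]
    rintro ⟨x, hx⟩
    have hxK : (x : L) ∈ K := by
      have : x ∈ (I : LieSubalgebra F K') := hx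
      rw [hI₁] at this
      exact (LieSubalgebra.mem_ofLe hKK' x).mp this
    exact (LieModule.isNilpotent_iff_forall (R := F)).mp hKnil ⟨x, hxK⟩
/-! ### Maximal homogeneous toral sets and their centralizers -/

/-- The centralizer of a subset `T` of a Lie algebra, as a Lie subalgebra. -/
def centralizerSub (F : Type*) {L : Type*} [Field F] [LieRing L] [LieAlgebra F L] (T : Set L) :
    LieSubalgebra F L where
  carrier := {x | ∀ t ∈ T, ⁅t, x⁆ = 0}
  add_mem' := fun ha hb t ht ↦ by rw [lie_add, ha t ht, hb t ht, add_zero]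
  zero_mem' := fun t _ ↦ lie_zero t
  smul_mem' := fun c x hx t ht ↦ by rw [lie_smul, hx t ht, smul_zero]
  lie_mem' := fun {x y} hx hy t ht ↦ by
    rw [leibniz_lie, hx t ht, hy t ht, zero_lie, lie_zero, add_zero]

/-- A set of pairwise commuting homogeneous elements whose adjoint action is semisimple. -/
def IsHomToral (lgr : G → Submodule F L) (T : Set L) : Prop :=
  ∀ x ∈ T, (∃ γ, x ∈ lgr γ) ∧ (ad F L x).IsSemisimple ∧ ∀ y ∈ T, ⁅x, y⁆ = 0

omit [AddCommGroup G] [DecidableEq G] in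
theorem exists_maximal_homToral {T₀ : Set L} (h₀ : IsHomToral lgr T₀) :
    ∃ T, T₀ ⊆ T ∧ IsHomToral lgr T ∧ ∀ T', IsHomToral lgr T' → T ⊆ T' → T' ⊆ T := by
  obtain ⟨T, hT, hmax⟩ := zorn_subset_nonempty {T | IsHomToral lgr T} (by
    intro c hc hchain _
    refine ⟨⋃₀ c, ?_, fun s hs ↦ Set.subset_sUnion_of_mem hs⟩
    rintro x ⟨s, hs, hxs⟩
    refine ⟨(hc hs x hxs).1, (hc hs x hxs).2.1, ?_⟩
    rintro y ⟨t, ht, hyt⟩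
    rcases hchain.total hs ht with h | h
    · exact (hc ht x (h hxs)).2.2 y hyt
    · exact (hc hs x hxs).2.2 y (h hyt)) T₀ h₀
  exact ⟨T, hT, hmax.prop, fun T' h1 h2 ↦ hmax.le_of_ge h1 h2⟩

include hint hlie in
theorem gradedProj_mem_centralizer {T : Set L} (hT : IsHomToral lgr T) {x : L}
    (hx : x ∈ centralizerSub F T) (δ : G) : gradedProj lgr hint δ x ∈ centralizerSub F T := by
  intro t ht
  obtain ⟨⟨τ, hτ⟩, -, -⟩ := hT t ht
  have : ∀ v, ⁅t, gradedProj lgr hint δ v⁆ = gradedProj lgr hint (τ + δ) ⁅t, v⁆ := by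
    refine grading_induction hint (fun ε v hv ↦ ?_) (by simp) (fun v w hv hw ↦ by simp [hv, hw])
    have h1 := hlie τ ε t hτ v hv
    by_cases h : ε = δ
    · subst h
      rw [gradedProj_of_mem hint hv, gradedProj_of_mem hint h1]
    · rw [gradedProj_of_mem_ne hint hv h, lie_zero, gradedProj_of_mem_ne hint h1]
      simpa using h
  rw [this, hx t ht, map_zero]

include hint hlie in
theorem centralizer_isCartan [IsAlgClosed F] [CharZero F] [Module.Finite F L] [IsKilling F L]
    {T : Set L} (hT : IsHomToral lgr T)
    (hmax : ∀ T', IsHomToral lgr T' → T ⊆ T' → T' ⊆ T) :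
    (centralizerSub F T).IsCartanSubalgebra where
  nilpotent := by
    set H := centralizerSub F T with hH
    refine isNilpotent_of_lieSet (F := F) {x : H | ∃ γ, (x : L) ∈ lgr γ} ?_ ?_ ?_
    · rintro x ⟨γ, hx⟩ y ⟨δ, hy⟩
      exact ⟨γ + δ, hlie γ δ _ hx _ hy⟩
    · rw [eq_top_iff]
      rintro ⟨x, hx⟩ -
      have : x ∈ (Submodule.span F {x : H | ∃ γ, (x : L) ∈ lgr γ}).map H.toSubmodule.subtype := by
        refine mem_of_gradedProj_mem hint fun δ ↦ ?_
        exact ⟨⟨_, gradedProj_mem_centralizer hint hlie hT hx δ⟩,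
          Submodule.subset_span ⟨δ, gradedProj_mem hint δ x⟩, rfl⟩
      obtain ⟨y, hy, hyx⟩ := this
      have : y = ⟨x, hx⟩ := Subtype.ext hyx
      exact this ▸ hy
    · -- The semisimple part `s` of a homogeneous `x ∈ H` lies in `T` by maximality, so it is central
      -- in `H`, and `ad x` agrees on `H` with its nilpotent part.
      rintro x ⟨γ, hx⟩
      obtain ⟨s, hs, hn, hadj⟩ := exists_jordan (F := F) (x : L)
      have hcs : Commute (ad F L (x : L)) (ad F L s) := Algebra.commute_of_mem_adjoin_self hadj
      have hsγ := semisimple_part_mem hint hlie hx hs hn hcs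
      have hsH : ∀ t ∈ T, ⁅t, s⁆ = 0 := fun t ht ↦ lie_eq_zero_of_mem_adjoin hadj (x.2 t ht)
      have hsT : s ∈ T := by
        refine hmax (insert s T) ?_ (Set.subset_insert s T) (Set.mem_insert s T)
        rintro y (rfl | hy)
        · refine ⟨⟨γ, hsγ⟩, hs, ?_⟩
          rintro z (rfl | hz)
          · exact lie_self _
          · rw [← lie_skew, hsH z hz, neg_zero]
        · refine ⟨(hT y hy).1, (hT y hy).2.1, ?_⟩
          rintro z (rfl | hz)
          · exact hsH y hy
          · exact (hT y hy).2.2 z hz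
      obtain ⟨k, hk⟩ := hn
      refine ⟨k, ?_⟩
      have key : ∀ (k : ℕ) (y : H), (((ad F H x) ^ k) y : L) =
          ((ad F L (x : L) - ad F L s) ^ k) (y : L) := by
        intro k
        induction k with
        | zero => simp
        | succ k ih =>
          intro y
          rw [pow_succ, pow_succ, Module.End.mul_apply, Module.End.mul_apply, ih]
          congr 1
          have : ⁅s, (y : L)⁆ = 0 := y.2 s hsT
          simp [this]
      ext y
      rw [key, hk]; rfl
  self_normalizing := by
    refine le_antisymm (fun y hy ↦ ?_) (LieSubalgebra.le_normalizer _)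
    rw [LieSubalgebra.mem_normalizer_iff'] at hy
    intro t ht
    have htH : t ∈ centralizerSub F T := fun u hu ↦ (hT u hu).2.2 t ht
    have h2 : ⁅t, ⁅t, y⁆⁆ = 0 := hy t htH t ht
    -- `ad t` is semisimple, so `(ad t) ^ 2` and `ad t` have the same kernel.
    have hss := (hT t ht).2.1
    have hy0 : y ∈ (ad F L t).maxGenEigenspace 0 := by
      rw [End.mem_maxGenEigenspace]
      exact ⟨2, by simp [pow_two, h2]⟩
    rw [hss.isFinitelySemisimple.maxGenEigenspace_eq_eigenspace, End.mem_eigenspace_iff] at hy0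
    simpa using hy0
end Grading

/-- Let `g = ⊕_{γ∈G} g_γ` be an abelian group grading of a
finite-dimensional semisimple Lie algebra over an algebraically closed field `F` of
characteristic `0`.  Then there exists a homogeneous Cartan subalgebra `h` of `g` such that
`h ∩ g_0` is a Cartan subalgebra of the identity component `g_0`. -/
theorem stmt_17 (F : Type) [Field F] [IsAlgClosed F] [CharZero F]
    (L : Type) [LieRing L] [LieAlgebra F L] [Module.Finite F L]
    [LieAlgebra.IsSemisimple F L]
    (G : Type) [AddCommGroup G] [DecidableEq G]
    (lgr : G → Submodule F L)
    (hinternal : DirectSum.IsInternal lgr)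
    (hlie : ∀ g h : G, ∀ x ∈ lgr g, ∀ y ∈ lgr h, ⁅x, y⁆ ∈ lgr (g + h)) :
    ∃ H : LieSubalgebra F L,
      H.IsCartanSubalgebra ∧
      ((H : Submodule F L) = ⨆ γ : G, (H : Submodule F L) ⊓ lgr γ) ∧
      ∃ g0 : LieSubalgebra F L, (g0 : Submodule F L) = lgr 0 ∧
        ∃ h0 : LieSubalgebra F g0, h0.IsCartanSubalgebra ∧
          (h0 : Submodule F g0) =
            Submodule.comap g0.incl.toLinearMap ((H : Submodule F L) ⊓ lgr 0) := by
  have : Infinite F := IsAlgClosed.instInfinite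
  let g0 : LieSubalgebra F L :=
    { lgr 0 with lie_mem' := fun {x y} hx hy ↦ by simpa using hlie 0 0 x hx y hy }
  obtain ⟨e, he⟩ := LieAlgebra.exists_isCartanSubalgebra_engel F g0
  set h0 := LieSubalgebra.engel F e with hh0
  obtain ⟨hab, hss⟩ := cartan_zero_toral hinternal hlie g0 rfl h0
  obtain ⟨T, hT₀, hT, hmax⟩ := exists_maximal_homToral (lgr := lgr)
    (T₀ := (fun x : g0 ↦ (x : L)) '' h0) (by
      rintro _ ⟨x, hx, rfl⟩
      refine ⟨⟨0, x.2⟩, hss x hx, ?_⟩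
      rintro _ ⟨y, hy, rfl⟩
      exact hab x hx y hy)
  refine ⟨centralizerSub F T, centralizer_isCartan hinternal hlie hT hmax, ?_, g0, rfl, h0, he, ?_⟩
  · refine le_antisymm (fun x hx ↦ ?_) (iSup_le fun γ ↦ inf_le_left)
    refine mem_of_gradedProj_mem hinternal fun δ ↦ ?_
    exact Submodule.mem_iSup_of_mem δ
      ⟨gradedProj_mem_centralizer hinternal hlie hT hx δ, gradedProj_mem hinternal δ x⟩
  · ext x
    constructor
    · intro hx
      exact ⟨fun t ht ↦ (hT t ht).2.2 x (hT₀ ⟨x, hx, rfl⟩), x.2⟩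
    · rintro ⟨hx, -⟩
      change x ∈ h0
      rw [← LieSubalgebra.IsCartanSubalgebra.self_normalizing (H := h0),
        LieSubalgebra.mem_normalizer_iff']
      intro y hy
      have : ⁅y, x⁆ = 0 := Subtype.ext (hx y (hT₀ ⟨y, hy, rfl⟩))
      rw [this]; exact h0.zero_mem
end

section
/- Let Φ = {±ε_i ± ε_j : 0 ≤ i < j ≤ 3} ⊂ ℚ⁴, where ε_0,ε_1,ε_2,ε_3 is the standard basis of ℚ⁴ (the root system of type D₄), and let Aut Φ = {g ∈ GL(ℚ⁴) : g(Φ) = Φ}. Let ι_τ ∈ Aut Φ be the linear map with ι_τ(ε_0)=ε_0, ι_τ(ε_1)=ε_2, ι_τ(ε_2)=ε_3, ι_τ(ε_3)=ε_1, and let θ ∈ Aut Φ be the linear map with θ(ε_0)=½(−ε_0−ε_1−ε_2−ε_3), θ(ε_1)=½(ε_0+ε_1−ε_2−ε_3), θ(ε_2)=½(ε_0−ε_1+ε_2−ε_3), θ(ε_3)=½(ε_0−ε_1−ε_2+ε_3). Then Aut Φ contains no element of order 9, and every element of order 3 in Aut Φ is conjugate within Aut Φ to ι_τ, to θ, or to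 ι_τ∘θ. -/
/-!
Elements of order nine are excluded by degrees alone: the ninth cyclotomic polynomial is
irreducible of degree `6`, hence coprime to the characteristic polynomial of a rational `4 × 4`
matrix, so `M ^ 9 = 1` forces `M ^ 3 = 1` (`pow_three_eq_one_of_pow_nine`).

For the conjugacy statement, `Φ` is the set of integral vectors of squared length `2`
(`mem_PhiD4_iff`). Since `g ε_i ± g ε_j` are roots, `g` is orthogonal and `2 g` is integral
(`exists_int_frame`), so the columns of `2 g` form an orthogonal frame among the `24` integral
vectors of squared length `4`; there are `1152` such frames. By Sylow theory every element of
order three is conjugate, under a Sylow `2`-subgroup, into the Sylow `3`-subgroup generated by the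
commuting elements `ι_τ` and `θ`, and a Sylow `2`-subgroup is given by signed permutations over a
dihedral group. That every frame of order three is carried to `ι_τ`, `θ` or `ι_τ θ` by one of these
signed permutations is verified by kernel computation (`frame_classification`).
-/

noncomputable section

/-- The root system `Φ = {±ε_i ± ε_j : 0 ≤ i < j ≤ 3}` of type `D₄` inside `ℚ⁴`. -/
def PhiD4 : Set (Fin 4 → ℚ) :=
  {v | ∃ i j : Fin 4, i < j ∧
    (v = Pi.single i (1 : ℚ) + Pi.single j (1 : ℚ) ∨
     v = Pi.single i (1 : ℚ) - Pi.single j (1 : ℚ) ∨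
     v = -Pi.single i (1 : ℚ) + Pi.single j (1 : ℚ) ∨
     v = -Pi.single i (1 : ℚ) - Pi.single j (1 : ℚ))}

/-- The matrix of `ι_τ`: `ε₀ ↦ ε₀`, `ε₁ ↦ ε₂ ↦ ε₃ ↦ ε₁` (columns are images of basis
vectors). -/
def iotaTauMat : Matrix (Fin 4) (Fin 4) ℚ :=
  !![1,0,0,0; 0,0,0,1; 0,1,0,0; 0,0,1,0]

/-- The matrix of the triality automorphism `θ` (columns are the images of `ε₀,…,ε₃`). -/
def thetaMat : Matrix (Fin 4) (Fin 4) ℚ :=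
  !![-1/2, 1/2, 1/2, 1/2;
     -1/2, 1/2, -1/2, -1/2;
     -1/2, -1/2, 1/2, -1/2;
     -1/2, -1/2, -1/2, 1/2]

set_option maxHeartbeats 1000000 in
theorem iotaTauMat_cube : iotaTauMat * (iotaTauMat * iotaTauMat) = 1 := by
  ext i j
  fin_cases i <;> fin_cases j <;>
    norm_num [iotaTauMat, Matrix.mul_apply, Fin.sum_univ_four, Matrix.one_apply,
      Matrix.cons_val_zero, Matrix.cons_val_one, Matrix.cons_val_two, Matrix.cons_val_three,
      Matrix.head_cons, Matrix.vecHead, Matrix.vecTail, Fin.ext_iff]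

set_option maxHeartbeats 1000000 in
theorem thetaMat_cube : thetaMat * (thetaMat * thetaMat) = 1 := by
  ext i j
  fin_cases i <;> fin_cases j <;>
    norm_num [thetaMat, Matrix.mul_apply, Fin.sum_univ_four, Matrix.one_apply,
      Matrix.cons_val_zero, Matrix.cons_val_one, Matrix.cons_val_two, Matrix.cons_val_three,
      Matrix.head_cons, Matrix.vecHead, Matrix.vecTail, Fin.ext_iff]

/-- `ι_τ` as an element of `GL₄(ℚ)`. -/
def iotaTauGL : GL (Fin 4) ℚ :=
  ⟨iotaTauMat, iotaTauMat * iotaTauMat, iotaTauMat_cube,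
    (mul_assoc _ _ _).trans iotaTauMat_cube⟩

/-- `θ` as an element of `GL₄(ℚ)`. -/
def thetaGL : GL (Fin 4) ℚ :=
  ⟨thetaMat, thetaMat * thetaMat, thetaMat_cube,
    (mul_assoc _ _ _).trans thetaMat_cube⟩

/-- `g ∈ GL₄(ℚ)` belongs to `Aut Φ`: it maps `Φ` onto `Φ`. -/
def PreservesPhi (g : GL (Fin 4) ℚ) : Prop :=
  (fun v => (g : Matrix (Fin 4) (Fin 4) ℚ).mulVec v) '' PhiD4 = PhiD4

/-! ### Elements of order nine -/

/-- A rational `4 × 4` matrix has a characteristic polynomial of degree `4`, while the ninth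
cyclotomic polynomial is irreducible of degree `6`; the two are therefore coprime. -/
theorem pow_three_eq_one_of_pow_nine (M : Matrix (Fin 4) (Fin 4) ℚ) (h : M ^ 9 = 1) :
    M ^ 3 = 1 := by
  have hirr : Irreducible (Polynomial.cyclotomic 9 ℚ) :=
    Polynomial.cyclotomic.irreducible_rat (by norm_num)
  have hdeg : (Polynomial.cyclotomic 9 ℚ).natDegree = 6 := by
    rw [Polynomial.natDegree_cyclotomic]; decide
  have hchar0 : M.charpoly ≠ 0 := M.charpoly_monic.ne_zero
  have hcop : IsCoprime (Polynomial.cyclotomic 9 ℚ) M.charpoly := by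
    refine (hirr.coprime_iff_not_dvd).2 fun hd => ?_
    have := Polynomial.natDegree_le_of_dvd hd hchar0
    rw [hdeg, Matrix.charpoly_natDegree_eq_dim] at this
    simp at this
  have hfac : Polynomial.cyclotomic 9 ℚ * (Polynomial.X ^ 3 - 1) = Polynomial.X ^ 9 - 1 := by
    have := Polynomial.cyclotomic_prime_pow_mul_X_pow_sub_one ℚ 3 1
    norm_num at this
    exact this
  obtain ⟨a, b, hab⟩ := hcop
  have e : (Polynomial.X ^ 3 - 1 : Polynomial ℚ) =
      a * (Polynomial.X ^ 9 - 1) + b * (Polynomial.X ^ 3 - 1) * M.charpoly := by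
    rw [← hfac]
    linear_combination -(Polynomial.X ^ 3 - 1 : Polynomial ℚ) * hab
  have := congrArg (Polynomial.aeval M) e
  simp only [map_add, map_mul, map_sub, map_pow, Polynomial.aeval_X, map_one, h, sub_self,
    Matrix.aeval_self_charpoly, mul_zero, add_zero] at this
  exact sub_eq_zero.1 this

/-! ### Roots as integral vectors of squared length two -/

theorem root_support :
    ∀ a ∈ [-1, 0, 1], ∀ b ∈ [-1, 0, 1], ∀ c ∈ [-1, 0, 1], ∀ d ∈ [-1, 0, 1],
      a * a + b * b + c * c + d * d = (2 : ℤ) →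
      ∃ i j : Fin 4, i < j ∧ (![a, b, c, d] i = 1 ∨ ![a, b, c, d] i = -1) ∧
        (![a, b, c, d] j = 1 ∨ ![a, b, c, d] j = -1) ∧
        ∀ k, k ≠ i → k ≠ j → ![a, b, c, d] k = 0 := by
  decide +kernel

/-- The `D₄` roots are exactly the integral vectors of squared length `2`. -/
theorem mem_PhiD4_iff (v : Fin 4 → ℚ) :
    v ∈ PhiD4 ↔ ∃ w : Fin 4 → ℤ, (∀ i, v i = w i) ∧
      w 0 ^ 2 + w 1 ^ 2 + w 2 ^ 2 + w 3 ^ 2 = 2 := by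
  constructor
  · rintro ⟨i, j, hij, h⟩
    have hs : ∀ a b : ℤ, a ^ 2 = 1 → b ^ 2 = 1 →
        v = (Pi.single i (a : ℚ) + Pi.single j (b : ℚ) : Fin 4 → ℚ) →
        ∃ w : Fin 4 → ℤ, (∀ i, v i = w i) ∧
          w 0 ^ 2 + w 1 ^ 2 + w 2 ^ 2 + w 3 ^ 2 = 2 := by
      rintro a b ha hb rfl
      refine ⟨Pi.single i a + Pi.single j b, fun k => ?_, ?_⟩
      · simp [Pi.single_apply]
      · have ha' : a * a = 1 := by rw [← ha]; ring
        have hb' : b * b = 1 := by rw [← hb]; ring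
        clear ha hb h
        revert hij
        fin_cases i <;> fin_cases j <;> simp [pow_two, ha', hb']
    rcases h with h | h | h | h
    · exact hs 1 1 rfl rfl (by simpa using h)
    · exact hs 1 (-1) rfl rfl (by rw [h]; simp [Pi.single_neg, sub_eq_add_neg])
    · exact hs (-1) 1 rfl rfl (by rw [h]; simp [Pi.single_neg])
    · exact hs (-1) (-1) rfl rfl (by rw [h]; simp [Pi.single_neg, sub_eq_add_neg])
  · rintro ⟨w, hv, hw⟩
    have bd : ∀ i, w i ∈ [-1, 0, 1] := by
      intro i
      have h2 : w i ^ 2 ≤ 2 := by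
        fin_cases i <;> simp <;>
          nlinarith [sq_nonneg (w 0), sq_nonneg (w 1), sq_nonneg (w 2), sq_nonneg (w 3)]
      have : w i < 2 := by nlinarith
      have : -2 < w i := by nlinarith
      simp only [List.mem_cons, List.not_mem_nil, or_false]
      omega
    have key : ∀ i j : Fin 4, i < j → ∀ a b : ℤ, (a = 1 ∨ a = -1) → (b = 1 ∨ b = -1) →
        v = (Pi.single i (a : ℚ) + Pi.single j (b : ℚ) : Fin 4 → ℚ) → v ∈ PhiD4 := by
      intro i j hij a b ha hb h
      refine ⟨i, j, hij, ?_⟩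
      rcases ha with rfl | rfl <;> rcases hb with rfl | rfl <;>
        simp [h, Pi.single_neg, sub_eq_add_neg]
    have fin : ∀ i j : Fin 4, i < j → (w i = 1 ∨ w i = -1) → (w j = 1 ∨ w j = -1) →
        (∀ k, k ≠ i → k ≠ j → w k = 0) → v ∈ PhiD4 := by
      intro i j hij hi hj hk
      refine key i j hij _ _ hi hj (funext fun k => ?_)
      rw [hv]
      by_cases h1 : k = i
      · subst h1; simp [hij.ne]
      · by_cases h2 : k = j
        · subst h2; simp [hij.ne']
        · simp [h1, h2, hk k h1 h2]
    obtain ⟨i, j, hij, hi, hj, hk⟩ := root_support _ (bd 0) _ (bd 1) _ (bd 2) _ (bd 3)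
      (by simpa only [pow_two] using hw)
    rw [show ![w 0, w 1, w 2, w 3] = w from by ext i; fin_cases i <;> rfl] at hi hj hk
    exact fin i j hij hi hj hk

/-! ### Automorphisms as orthogonal frames of half-integral vectors -/

/-- Inner product of integral vectors, written out so that it evaluates quickly. -/
def dotZ (v w : Fin 4 → ℤ) : ℤ := v 0 * w 0 + v 1 * w 1 + v 2 * w 2 + v 3 * w 3

/-- The columns of an automorphism `g` satisfy `g ε_i ± g ε_j ∈ Φ`. Hence `2 g` is integral, the
columns are pairwise orthogonal, and the squared lengths of any two columns add up to `2`, so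
each of them is `1`. -/
theorem exists_int_frame (g : GL (Fin 4) ℚ) (hg : PreservesPhi g) :
    ∃ c : Fin 4 → Fin 4 → ℤ, (∀ i j, 2 * (g : Matrix (Fin 4) (Fin 4) ℚ) i j = c j i) ∧
      (∀ j, dotZ (c j) (c j) = 4) ∧ ∀ i j, i ≠ j → dotZ (c i) (c j) = 0 := by
  set M := (g : Matrix (Fin 4) (Fin 4) ℚ) with hM
  have him : ∀ v ∈ PhiD4, M.mulVec v ∈ PhiD4 := fun v hv => by
    have : M.mulVec v ∈ (fun v => M.mulVec v) '' PhiD4 := ⟨v, hv, rfl⟩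
    rwa [show (fun v => M.mulVec v) '' PhiD4 = PhiD4 from hg] at this
  have hlt : ∀ i j : Fin 4, i < j →
      (∃ a : Fin 4 → ℤ, (∀ k, M k i + M k j = a k) ∧
        a 0 ^ 2 + a 1 ^ 2 + a 2 ^ 2 + a 3 ^ 2 = 2) ∧
      (∃ b : Fin 4 → ℤ, (∀ k, M k i - M k j = b k) ∧
        b 0 ^ 2 + b 1 ^ 2 + b 2 ^ 2 + b 3 ^ 2 = 2) := by
    intro i j hij
    have h1 := (mem_PhiD4_iff _).1 (him _ ⟨i, j, hij, Or.inl rfl⟩)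
    have h2 := (mem_PhiD4_iff _).1 (him _ ⟨i, j, hij, Or.inr (Or.inl rfl)⟩)
    simp only [Matrix.mulVec_add, Matrix.mulVec_sub, Pi.add_apply, Pi.sub_apply,
      Matrix.mulVec_single_one, Matrix.col_apply] at h1 h2
    exact ⟨h1, h2⟩
  have hint : ∀ j i, ∃ n : ℤ, 2 * M i j = n := by
    have hl : ∀ p q : Fin 4, p < q → ∀ i, (∃ n : ℤ, 2 * M i p = n) ∧ ∃ n : ℤ, 2 * M i q = n := by
      intro p q hpq i
      obtain ⟨⟨a, ha, -⟩, b, hb, -⟩ := hlt p q hpq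
      refine ⟨⟨a i + b i, ?_⟩, a i - b i, ?_⟩ <;> push_cast <;> rw [← ha, ← hb] <;> ring
    intro j i
    fin_cases j
    · exact (hl 0 1 (by decide) i).1
    · exact (hl 0 1 (by decide) i).2
    · exact (hl 0 2 (by decide) i).2
    · exact (hl 0 3 (by decide) i).2
  choose c hc using hint
  have hpair : ∀ i j, i < j → dotZ (c i) (c i) + dotZ (c j) (c j) = 8 ∧
      dotZ (c i) (c j) = 0 := by
    intro i j hij
    obtain ⟨⟨a, ha, ha2⟩, b, hb, hb2⟩ := hlt i j hij
    have hA : ∀ k, c i k + c j k = 2 * a k := fun k => by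
      have : (c i k + c j k : ℚ) = 2 * a k := by rw [← hc, ← hc, ← ha]; ring
      exact_mod_cast this
    have hB : ∀ k, c i k - c j k = 2 * b k := fun k => by
      have : (c i k - c j k : ℚ) = 2 * b k := by rw [← hc, ← hc, ← hb]; ring
      exact_mod_cast this
    have hci : ∀ k, c i k = a k + b k := fun k => by linarith [hA k, hB k]
    have hcj : ∀ k, c j k = a k - b k := fun k => by linarith [hA k, hB k]
    simp only [dotZ, hci, hcj]
    constructor
    · linear_combination 2 * ha2 + 2 * hb2
    · linear_combination ha2 - hb2
  refine ⟨c, fun i j => hc j i, ?_, ?_⟩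
  · have h01 := (hpair 0 1 (by decide)).1
    have h02 := (hpair 0 2 (by decide)).1
    have h12 := (hpair 1 2 (by decide)).1
    have h03 := (hpair 0 3 (by decide)).1
    intro j
    fin_cases j <;> simp <;> linarith
  · intro i j hij
    rcases lt_or_gt_of_ne hij with h | h
    · exact (hpair i j h).2
    · have := (hpair j i h).2
      simp only [dotZ] at this ⊢
      linarith

/-- The `24` integral vectors of squared length `4`. -/
def shortVecs : List (Fin 4 → ℤ) :=
  [![2, 0, 0, 0], ![-2, 0, 0, 0], ![0, 2, 0, 0], ![0, -2, 0, 0],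
   ![0, 0, 2, 0], ![0, 0, -2, 0], ![0, 0, 0, 2], ![0, 0, 0, -2],
   ![1, 1, 1, 1], ![1, 1, 1, -1], ![1, 1, -1, 1], ![1, 1, -1, -1],
   ![1, -1, 1, 1], ![1, -1, 1, -1], ![1, -1, -1, 1], ![1, -1, -1, -1],
   ![-1, 1, 1, 1], ![-1, 1, 1, -1], ![-1, 1, -1, 1], ![-1, 1, -1, -1],
   ![-1, -1, 1, 1], ![-1, -1, 1, -1], ![-1, -1, -1, 1], ![-1, -1, -1, -1]]

theorem shortVecs_complete :
    ∀ a ∈ [-2, -1, 0, 1, 2], ∀ b ∈ [-2, -1, 0, 1, 2], ∀ c ∈ [-2, -1, 0, 1, 2],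
      ∀ d ∈ [-2, -1, 0, 1, 2], a * a + b * b + c * c + d * d = (4 : ℤ) →
        ![a, b, c, d] ∈ shortVecs := by
  decide +kernel

theorem mem_shortVecs (v : Fin 4 → ℤ) (h : dotZ v v = 4) : v ∈ shortVecs := by
  have hb : ∀ i, v i ∈ [-2, -1, 0, 1, 2] := by
    intro i
    have h2 : v i ^ 2 ≤ 4 := by
      unfold dotZ at h
      fin_cases i <;> simp <;>
        nlinarith [sq_nonneg (v 0), sq_nonneg (v 1), sq_nonneg (v 2), sq_nonneg (v 3)]
    have : v i < 3 := by nlinarith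
    have : -3 < v i := by nlinarith
    simp only [List.mem_cons, List.not_mem_nil, or_false]
    omega
  have := shortVecs_complete _ (hb 0) _ (hb 1) _ (hb 2) _ (hb 3) h
  rwa [show ![v 0, v 1, v 2, v 3] = v from by ext i; fin_cases i <;> rfl] at this

/-! ### Search for a conjugating signed permutation -/

/-- The eight permutations in the dihedral group generated by the Klein four-group and the
transposition `(2 3)`, as functions. -/
def dihedralPerms : List (Fin 4 → Fin 4) :=
  [![0, 1, 2, 3], ![1, 0, 3, 2], ![2, 3, 0, 1], ![3, 2, 1, 0],
   ![0, 1, 3, 2], ![1, 0, 2, 3], ![2, 3, 1, 0], ![3, 2, 0, 1]]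

/-- Sign vectors up to a global sign, which acts trivially under conjugation. -/
def signVecs : List (Fin 4 → ℤ) :=
  [![1, 1, 1, 1], ![1, 1, 1, -1], ![1, 1, -1, 1], ![1, 1, -1, -1],
   ![1, -1, 1, 1], ![1, -1, 1, -1], ![1, -1, -1, 1], ![1, -1, -1, -1]]

/-- The columns of `2 ι_τ`, `2 θ` and `2 ι_τ θ`. -/
def targets : List (Fin 4 → Fin 4 → ℤ) :=
  [![![2, 0, 0, 0], ![0, 0, 2, 0], ![0, 0, 0, 2], ![0, 2, 0, 0]],
   ![![-1, -1, -1, -1], ![1, 1, -1, -1], ![1, -1, 1, -1], ![1, -1, -1, 1]],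
   ![![-1, -1, -1, -1], ![1, -1, 1, -1], ![1, -1, -1, 1], ![1, 1, -1, -1]]]

set_option synthInstance.maxHeartbeats 200000 in
set_option synthInstance.maxSize 1000 in
/-- The finite content of the classification. `Aut Φ` has order `1152 = 2⁷ · 9`, the signed
permutations over `dihedralPerms` form a Sylow `2`-subgroup, and conjugating by these moves every
element of order three to one of the three targets. The hypotheses say that the matrix `g` with
columns `c_i / 2` is orthogonal and that `g ^ 2` is its transpose, that is, `g ^ 3 = 1`. The four
equations for the first column, and the condition on the diagonal in the conclusion, are implied by
what follows them; they cut the search short. -/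
theorem frame_classification :
    ∀ c₀ ∈ shortVecs,
    ∀ c₁ ∈ shortVecs.filter (dotZ c₀ · = 0),
    ∀ c₂ ∈ (shortVecs.filter (dotZ c₀ · = 0)).filter (dotZ c₁ · = 0),
    ∀ c₃ ∈ ((shortVecs.filter (dotZ c₀ · = 0)).filter (dotZ c₁ · = 0)).filter (dotZ c₂ · = 0),
    c₀ 0 * c₀ 0 + c₁ 0 * c₀ 1 + c₂ 0 * c₀ 2 + c₃ 0 * c₀ 3 = 2 * c₀ 0 →
    c₀ 1 * c₀ 0 + c₁ 1 * c₀ 1 + c₂ 1 * c₀ 2 + c₃ 1 * c₀ 3 = 2 * c₁ 0 →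
    c₀ 2 * c₀ 0 + c₁ 2 * c₀ 1 + c₂ 2 * c₀ 2 + c₃ 2 * c₀ 3 = 2 * c₂ 0 →
    c₀ 3 * c₀ 0 + c₁ 3 * c₀ 1 + c₂ 3 * c₀ 2 + c₃ 3 * c₀ 3 = 2 * c₃ 0 →
    (∀ i j, c₀ i * ![c₀, c₁, c₂, c₃] j 0 + c₁ i * ![c₀, c₁, c₂, c₃] j 1 +
      c₂ i * ![c₀, c₁, c₂, c₃] j 2 + c₃ i * ![c₀, c₁, c₂, c₃] j 3 =
        2 * ![c₀, c₁, c₂, c₃] i j) →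
    (∀ i j, ![c₀, c₁, c₂, c₃] j i = if i = j then 2 else 0) ∨
    ∃ t ∈ targets, ∃ σ ∈ dihedralPerms, (∀ i, ![c₀, c₁, c₂, c₃] (σ i) (σ i) = t i i) ∧
      ∃ e ∈ signVecs, ∀ i j, e i * e j * ![c₀, c₁, c₂, c₃] (σ j) (σ i) = t j i := by
  decide +kernel

/-! ### Signed permutations as automorphisms -/

/-- The signed permutation `v ↦ (i ↦ e i * v (σ i))` as an element of `GL₄(ℚ)`. -/
def signedPerm (σ : Equiv.Perm (Fin 4)) (e : Fin 4 → ℤ) (he : ∀ i, e i * e i = 1) :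
    GL (Fin 4) ℚ where
  val := Matrix.of fun i k => if k = σ i then (e i : ℚ) else 0
  inv := Matrix.of fun k i => if k = σ i then (e i : ℚ) else 0
  val_inv := by
    have he' : ∀ i, (e i * e i : ℚ) = 1 := fun i => by exact_mod_cast he i
    ext i j
    by_cases h : i = j
    · subst h
      simp [Matrix.mul_apply, he']
    · simp [Matrix.mul_apply, h, Ne.symm h]
  inv_val := by
    have he' : ∀ i, (e i * e i : ℚ) = 1 := fun i => by exact_mod_cast he i
    rw [mul_eq_one_comm]
    ext i j
    by_cases h : i = j
    · subst h
      simp [Matrix.mul_apply, he']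
    · simp [Matrix.mul_apply, h, Ne.symm h]

theorem signedPerm_mulVec (σ : Equiv.Perm (Fin 4)) (e : Fin 4 → ℤ) (he : ∀ i, e i * e i = 1)
    (v : Fin 4 → ℚ) (i : Fin 4) :
    (signedPerm σ e he : Matrix (Fin 4) (Fin 4) ℚ).mulVec v i = e i * v (σ i) := by
  simp [signedPerm, Matrix.mulVec, dotProduct]

theorem signedPerm_norm (σ : Equiv.Perm (Fin 4)) (e : Fin 4 → ℤ) (he : ∀ i, e i * e i = 1)
    (w : Fin 4 → ℤ) (hw : w 0 ^ 2 + w 1 ^ 2 + w 2 ^ 2 + w 3 ^ 2 = 2) :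
    (e 0 * w (σ 0)) ^ 2 + (e 1 * w (σ 1)) ^ 2 + (e 2 * w (σ 2)) ^ 2 +
      (e 3 * w (σ 3)) ^ 2 = 2 := by
  have h := Equiv.sum_comp σ fun i => w i ^ 2
  simp only [Fin.sum_univ_four] at h
  simp only [mul_pow, pow_two (e _), he, one_mul]
  rw [h, hw]

theorem signedPerm_preserves (σ : Equiv.Perm (Fin 4)) (e : Fin 4 → ℤ)
    (he : ∀ i, e i * e i = 1) : PreservesPhi (signedPerm σ e he) := by
  apply Set.Subset.antisymm
  · rintro _ ⟨v, hv, rfl⟩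
    obtain ⟨w, hvw, hw⟩ := (mem_PhiD4_iff v).1 hv
    refine (mem_PhiD4_iff _).2 ⟨fun i => e i * w (σ i), fun i => ?_, signedPerm_norm σ e he w hw⟩
    simp [signedPerm_mulVec, hvw]
  · intro v hv
    obtain ⟨w, hvw, hw⟩ := (mem_PhiD4_iff v).1 hv
    refine ⟨fun k => e (σ.symm k) * v (σ.symm k), (mem_PhiD4_iff _).2
      ⟨fun k => e (σ.symm k) * w (σ.symm k), fun i => by simp [hvw],
        signedPerm_norm σ.symm (fun k => e (σ.symm k)) (fun i => he _) w hw⟩, ?_⟩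
    funext i
    have he' : (e i * e i : ℚ) = 1 := by exact_mod_cast he i
    simp [signedPerm_mulVec, ← mul_assoc, he']

theorem signedPerm_conj (σ : Equiv.Perm (Fin 4)) (e : Fin 4 → ℤ) (he : ∀ i, e i * e i = 1)
    (g t : GL (Fin 4) ℚ)
    (h : ∀ i j, (e i * e j * (g : Matrix (Fin 4) (Fin 4) ℚ) (σ i) (σ j) : ℚ) =
      (t : Matrix (Fin 4) (Fin 4) ℚ) i j) :
    signedPerm σ e he * g * (signedPerm σ e he)⁻¹ = t := by
  rw [mul_inv_eq_iff_eq_mul]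
  ext i j
  obtain ⟨k, rfl⟩ := σ.surjective j
  have he' : (e k * e k : ℚ) = 1 := by exact_mod_cast he k
  simp only [Units.val_mul, Matrix.mul_apply, signedPerm, Matrix.of_apply, ite_mul, zero_mul,
    mul_ite, mul_zero, Finset.sum_ite_eq', Finset.sum_ite_eq, Finset.mem_univ, if_true,
    EmbeddingLike.apply_eq_iff_eq, ← h]
  linear_combination -(e i * (g : Matrix (Fin 4) (Fin 4) ℚ) (σ i) (σ k)) * he'

theorem exists_conj_of_order_three (g : GL (Fin 4) ℚ) (hg : PreservesPhi g)
    (h3 : orderOf g = 3) :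
    ∃ c : GL (Fin 4) ℚ, PreservesPhi c ∧
      (c * g * c⁻¹ = iotaTauGL ∨ c * g * c⁻¹ = thetaGL ∨
       c * g * c⁻¹ = iotaTauGL * thetaGL) := by
  obtain ⟨c, hc, hnorm, horth⟩ := exists_int_frame g hg
  have hg3 : (g : Matrix (Fin 4) (Fin 4) ℚ) * (g * g) = 1 := by
    have : g ^ 3 = 1 := h3 ▸ pow_orderOf_eq_one g
    rw [← Units.val_mul, ← Units.val_mul, ← Units.val_one, ← this]
    simp only [pow_three]
  have hg1 : g ≠ 1 := by
    rintro rfl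
    simp at h3
  have hcc : ![c 0, c 1, c 2, c 3] = c := by ext i; fin_cases i <;> rfl
  -- orthogonality of `g` turns `g ^ 3 = 1` into `g ^ 2 = gᵀ`
  have hsq : ∀ i j, c 0 i * c j 0 + c 1 i * c j 1 + c 2 i * c j 2 + c 3 i * c j 3 =
      2 * c i j := by
    have hT : (g : Matrix (Fin 4) (Fin 4) ℚ).transpose * g = 1 := by
      ext i j
      have hd : dotZ (c i) (c j) = if i = j then 4 else 0 := by
        split_ifs with h
        · subst h; exact hnorm i
        · exact horth i j h
      have hd' : ((dotZ (c i) (c j) : ℤ) : ℚ) = ((if i = j then 4 else 0 : ℤ) : ℚ) := by rw [hd]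
      simp only [dotZ] at hd'
      push_cast at hd'
      simp only [← hc] at hd'
      simp only [Matrix.mul_apply, Fin.sum_univ_four, Matrix.one_apply, Matrix.transpose_apply]
      split_ifs at hd' ⊢ <;> linarith
    have hgg : (g : Matrix (Fin 4) (Fin 4) ℚ) * g = (g : Matrix (Fin 4) (Fin 4) ℚ).transpose := by
      calc (g : Matrix (Fin 4) (Fin 4) ℚ) * g
          = ((g : Matrix (Fin 4) (Fin 4) ℚ).transpose * g) * (g * g) := by rw [hT, one_mul]
        _ = _ := by rw [mul_assoc, hg3, mul_one]
    intro i j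
    have h := congrFun (congrFun hgg i) j
    simp only [Matrix.mul_apply, Fin.sum_univ_four, Matrix.transpose_apply] at h
    have : ((c 0 i * c j 0 + c 1 i * c j 1 + c 2 i * c j 2 + c 3 i * c j 3 : ℤ) : ℚ) =
        ((2 * c i j : ℤ) : ℚ) := by
      push_cast
      simp only [← hc]
      linear_combination 4 * h
    exact_mod_cast this
  have hmem := fun i => mem_shortVecs _ (hnorm i)
  have hcls := frame_classification (c 0) (hmem 0) (c 1)
    (by simp [hmem, horth]) (c 2) (by simp [hmem, horth]) (c 3) (by simp [hmem, horth])
    (hsq 0 0) (hsq 1 0) (hsq 2 0) (hsq 3 0)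
  rw [hcc] at hcls
  rcases hcls hsq with h | ⟨t, ht, σ, hσ, -, e, he, h⟩
  · refine absurd ?_ hg1
    ext i j
    have h1 := hc i j
    rw [h i j] at h1
    by_cases hij : i = j
    · simp [hij] at h1 ⊢; exact h1
    · simp [hij] at h1 ⊢; exact h1
  · have hinj : Function.Injective σ :=
      (show ∀ σ ∈ dihedralPerms, Function.Injective σ by decide +kernel) σ hσ
    have he1 : ∀ i, e i * e i = 1 :=
      (show ∀ e ∈ signVecs, ∀ i, e i * e i = 1 by decide +kernel) e he
    let s : Equiv.Perm (Fin 4) := Equiv.ofBijective σ (Finite.injective_iff_bijective.1 hinj)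
    have hconj : ∀ i j,
        2 * (e i * e j * (g : Matrix (Fin 4) (Fin 4) ℚ) (s i) (s j) : ℚ) = t j i := by
      intro i j
      rw [← h i j]
      push_cast
      rw [← hc]
      simp only [s, Equiv.ofBijective_apply]
      ring
    have fin : ∀ t' : GL (Fin 4) ℚ,
        (∀ i j, (t j i : ℚ) = 2 * (t' : Matrix (Fin 4) (Fin 4) ℚ) i j) →
        signedPerm s e he1 * g * (signedPerm s e he1)⁻¹ = t' := fun t' ht' =>
      signedPerm_conj s e he1 g t' fun i j => by linarith [hconj i j, ht' i j]
    refine ⟨signedPerm s e he1, signedPerm_preserves s e he1, ?_⟩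
    simp only [targets, List.mem_cons, List.not_mem_nil, or_false] at ht
    rcases ht with rfl | rfl | rfl
    · refine Or.inl (fin _ fun i j => ?_)
      fin_cases i <;> fin_cases j <;> norm_num [iotaTauGL, iotaTauMat]
    · refine Or.inr (Or.inl (fin _ fun i j => ?_))
      fin_cases i <;> fin_cases j <;> norm_num [thetaGL, thetaMat]
    · refine Or.inr (Or.inr (fin _ fun i j => ?_))
      fin_cases i <;> fin_cases j <;>
        norm_num [iotaTauGL, iotaTauMat, thetaGL, thetaMat, Matrix.mul_apply, Fin.sum_univ_four,
          Matrix.cons_val_two, Matrix.cons_val_three, Matrix.vecHead, Matrix.vecTail, Fin.ext_iff]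

/-- The automorphism group of the root system of type `D₄` contains no
element of order `9`, and every element of order `3` in it is conjugate within `Aut Φ` to
`ι_τ`, to `θ`, or to `ι_τ ∘ θ`. -/
theorem stmt_18 :
    (∀ g : GL (Fin 4) ℚ, PreservesPhi g → orderOf g ≠ 9) ∧
    (∀ g : GL (Fin 4) ℚ, PreservesPhi g → orderOf g = 3 →
      ∃ c : GL (Fin 4) ℚ, PreservesPhi c ∧
        (c * g * c⁻¹ = iotaTauGL ∨ c * g * c⁻¹ = thetaGL ∨
         c * g * c⁻¹ = iotaTauGL * thetaGL)) := by
  refine ⟨fun g _ h9 => ?_, exists_conj_of_order_three⟩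
  have hp : g ^ 9 = 1 := h9 ▸ pow_orderOf_eq_one g
  have h3 : g ^ 3 = 1 := Units.ext (pow_three_eq_one_of_pow_nine _ (congrArg Units.val hp))
  have := orderOf_dvd_of_pow_eq_one h3
  rw [h9] at this
  norm_num at this

end
end
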